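/- arXiv:2312.07714 — 10 statements merged into one kernel-verified Lean document; each statement's English description precedes it below -/
import Mathlib

section
/- Let Y be a real vector space and ≺ a compatible partial preference on Y with positive cone P_≺. Then every equivalence class E of the relation ≖ on P_≺ (i.e. every open component of P_≺) is a convex cone which is relatively algebraic open, i.e. E = icr E. -/
open Pointwise

variable {Y : Type*} [AddCommGroup Y] [Module ℝ Y]

/-- The positive cone of a binary relation: `{y | 0 ≺ y}`. -/
def posCone (r : Y → Y → Prop) : Set Y := {y | r 0 y}

/-- A compatible partial preference: a binary relation compatible with the algebraic
operations which is asymmetric and transitive. -/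
structure IsCompatiblePartialPreference (r : Y → Y → Prop) : Prop where
  smul_compat : ∀ ⦃y₁ y₂ : Y⦄ ⦃l : ℝ⦄, 0 < l → r y₁ y₂ → r (l • y₁) (l • y₂)
  add_compat : ∀ ⦃y₁ y₂ : Y⦄ (y : Y), r y₁ y₂ → r (y₁ + y) (y₂ + y)
  asymm : ∀ ⦃y₁ y₂ : Y⦄, r y₁ y₂ → ¬ r y₂ y₁
  trans : ∀ ⦃y₁ y₂ y₃ : Y⦄, r y₁ y₂ → r y₂ y₃ → r y₁ y₃

/-- A compatible weak preference: a compatible partial preference whose indifference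
relation (`y ≍ z` iff neither `y ≺ z` nor `z ≺ y`) is transitive. -/
structure IsCompatibleWeakPreference (r : Y → Y → Prop)
    extends IsCompatiblePartialPreference r : Prop where
  indiff_trans : ∀ ⦃y z u : Y⦄, ¬ r y z → ¬ r z y → ¬ r z u → ¬ r u z → ¬ r y u ∧ ¬ r u y

/-- The majorization relation on the positive cone: `y ⊴ z` iff `μ • y ≺ z` for some `μ > 0`. -/
def maj (r : Y → Y → Prop) (y z : Y) : Prop := ∃ μ : ℝ, 0 < μ ∧ r (μ • y) z

/-- The equivalence `y ≖ z` : `y ⊴ z` and `z ⊴ y`. -/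
def majEquiv (r : Y → Y → Prop) (y z : Y) : Prop := maj r y z ∧ maj r z y

/-- The `≖`-equivalence class of `y` inside the positive cone. -/
def componentOf (r : Y → Y → Prop) (y : Y) : Set Y := {z ∈ posCone r | majEquiv r z y}

/-- Open components of the positive cone: the equivalence classes of `≖`. -/
def IsOpenComponent (r : Y → Y → Prop) (E : Set Y) : Prop :=
  ∃ y ∈ posCone r, E = componentOf r y

/-- The order `⊴*` on open components: `E₁ ⊴* E₂` iff `y₁ ⊴ y₂` for all `y₁ ∈ E₁`, `y₂ ∈ E₂`. -/
def compLE (r : Y → Y → Prop) (E₁ E₂ : Set Y) : Prop :=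
  ∀ y₁ ∈ E₁, ∀ y₂ ∈ E₂, maj r y₁ y₂

/-- The relative algebraic interior (intrinsic core) of a (convex) set. -/
def icr (Q : Set Y) : Set Y :=
  {z ∈ Q | ∀ y ∈ Q, ∃ δ : ℝ, 0 < δ ∧ ∀ t : ℝ, -δ < t → t < δ → z + t • (y - z) ∈ Q}

/-- The algebraic interior (core) of a set. -/
def algCr (Q : Set Y) : Set Y :=
  {z ∈ Q | ∀ y : Y, ∃ δ : ℝ, 0 < δ ∧ ∀ t : ℝ, -δ < t → t < δ → z + t • (y - z) ∈ Q}

/-- The vector space associated with a convex cone `K`: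
`L_K = {h | y + t•h ∈ K for all y ∈ K, t ∈ ℝ}`. -/
def assocSubspace (K : Set Y) : Set Y := {h | ∀ y ∈ K, ∀ t : ℝ, y + t • h ∈ K}

/-- A cone: a set closed under multiplication by positive reals. -/
def IsConeSet (K : Set Y) : Prop := ∀ y ∈ K, ∀ l : ℝ, 0 < l → l • y ∈ K

/-- A face of a convex set `Q`: a nonempty convex subset `F ⊆ Q` such that whenever a point
`α•u + (1-α)•v` (with `u, v ∈ Q`, `0 < α < 1`) lies in `F`, both `u` and `v` lie in `F`. -/
def IsFaceOf (Q F : Set Y) : Prop :=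
  F.Nonempty ∧ Convex ℝ F ∧ F ⊆ Q ∧
    ∀ u ∈ Q, ∀ v ∈ Q, ∀ α : ℝ, 0 < α → α < 1 → α • u + (1 - α) • v ∈ F → u ∈ F ∧ v ∈ F

/-- `F_y`: the members of the family `F` not vanishing at `y`. -/
def Fy (F : Set (Y →ₗ[ℝ] ℝ)) (y : Y) : Set (Y →ₗ[ℝ] ℝ) := {φ ∈ F | φ y ≠ 0}

/-- `φ` is the least element of `S` with respect to `le`. -/
def IsLeastWrt (le : (Y →ₗ[ℝ] ℝ) → (Y →ₗ[ℝ] ℝ) → Prop) (S : Set (Y →ₗ[ℝ] ℝ))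
    (φ : Y →ₗ[ℝ] ℝ) : Prop :=
  φ ∈ S ∧ ∀ ψ ∈ S, le φ ψ

/-- A cortege of linear functions on `Y`: a family `F` of linear functions linearly ordered
by `le` such that every nonempty `F_y` has a least element `φ_y`, and every `φ ∈ F` is `φ_y`
for some `y`. -/
structure IsCortege (F : Set (Y →ₗ[ℝ] ℝ))
    (le : (Y →ₗ[ℝ] ℝ) → (Y →ₗ[ℝ] ℝ) → Prop) : Prop where
  refl : ∀ φ ∈ F, le φ φ
  antisymm : ∀ φ ∈ F, ∀ ψ ∈ F, le φ ψ → le ψ φ → φ = ψ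
  trans : ∀ φ ∈ F, ∀ ψ ∈ F, ∀ χ ∈ F, le φ ψ → le ψ χ → le φ χ
  total : ∀ φ ∈ F, ∀ ψ ∈ F, le φ ψ ∨ le ψ φ
  least_exists : ∀ y : Y, Fy F y = ∅ ∨ ∃ φ, IsLeastWrt le (Fy F y) φ
  surj : ∀ φ ∈ F, ∃ y : Y, IsLeastWrt le (Fy F y) φ

/-- A step-linear function: `u(y) = 0` if `F_y = ∅` and `u(y) = φ_y(y)` otherwise,
for some cortege `(F, le)`. -/
def IsStepLinear (u : Y → ℝ) : Prop :=
  ∃ (F : Set (Y →ₗ[ℝ] ℝ)) (le : (Y →ₗ[ℝ] ℝ) → (Y →ₗ[ℝ] ℝ) → Prop),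
    IsCortege F le ∧
      ∀ y : Y, (Fy F y = ∅ ∧ u y = 0) ∨ ∃ φ, IsLeastWrt le (Fy F y) φ ∧ u y = φ y

/-! Writing `y ≺ z` as `z - y ∈ C` for a convex cone `C`, the open component of `y` is the set of
`z` with `z - a • y ∈ C` and `b • y - z ∈ C` for some `a, b > 0`; both conditions are preserved by
sums and positive multiples. If `w` lies in the component with constants `c, d`, then `z - s • w`
satisfies them with `a - s * d` and `b - s * c`, which stay positive for small `s > 0`. So the
segment from `w` to `z` extends beyond `z` inside the component. -/

section

variable {𝕜 M : Type*} [Semiring 𝕜] [PartialOrder 𝕜] [AddCommGroup M] [Module 𝕜 M]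

theorem exists_convexCone_rel_iff_sub_mem {r : M → M → Prop}
    (hsmul : ∀ ⦃y₁ y₂ : M⦄ ⦃l : 𝕜⦄, 0 < l → r y₁ y₂ → r (l • y₁) (l • y₂))
    (hadd : ∀ ⦃y₁ y₂ : M⦄ (y : M), r y₁ y₂ → r (y₁ + y) (y₂ + y))
    (htrans : ∀ ⦃y₁ y₂ y₃ : M⦄, r y₁ y₂ → r y₂ y₃ → r y₁ y₃) :
    ∃ C : ConvexCone 𝕜 M, ∀ y z, r y z ↔ z - y ∈ C := by
  have rel_smul ⦃l : 𝕜⦄ (hl : 0 < l) ⦃y : M⦄ (hy : r 0 y) : r 0 (l • y) := by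
    simpa only [smul_zero] using hsmul hl hy
  have rel_add ⦃y : M⦄ (hy : r 0 y) ⦃z : M⦄ (hz : r 0 z) : r 0 (y + z) :=
    htrans hz (by simpa only [zero_add] using hadd z hy)
  refine ⟨⟨{y | r 0 y}, rel_smul, rel_add⟩, fun y z => ⟨fun hyz => ?_, fun hyz => ?_⟩⟩
  · change r 0 (z - y)
    simpa only [add_neg_cancel, ← sub_eq_add_neg] using hadd (-y) hyz
  · simpa only [zero_add, sub_add_cancel] using hadd y hyz

end

section

variable {𝕜 M : Type*} [Ring 𝕜] [PartialOrder 𝕜] [IsStrictOrderedRing 𝕜]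
  [AddCommGroup M] [Module 𝕜 M]

/-- The open component of a convex cone `C` through `y`: the points squeezed between two positive
multiples of `y` in the order `u ≤ v ↔ v - u ∈ C`. It is meant for `y ∈ C`, where it is the set of
points of `C` equivalent to `y` under majorization. -/
def openComponent (C : ConvexCone 𝕜 M) (y : M) : ConvexCone 𝕜 M where
  carrier := {z | ∃ a b : 𝕜, 0 < a ∧ 0 < b ∧ z - a • y ∈ C ∧ b • y - z ∈ C}
  smul_mem' := by
    rintro l hl z ⟨a, b, ha, hb, hlower, hupper⟩
    refine ⟨l * a, l * b, mul_pos hl ha, mul_pos hl hb, ?_, ?_⟩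
    · simpa only [smul_sub, mul_smul] using C.smul_mem hl hlower
    · simpa only [smul_sub, mul_smul] using C.smul_mem hl hupper
  add_mem' := by
    rintro z ⟨a, b, ha, hb, hz_lower, hz_upper⟩ w ⟨c, d, hc, hd, hw_lower, hw_upper⟩
    refine ⟨a + c, b + d, add_pos ha hc, add_pos hb hd, ?_, ?_⟩
    · simpa only [add_smul, add_sub_add_comm] using C.add_mem hz_lower hw_lower
    · simpa only [add_smul, add_sub_add_comm] using C.add_mem hz_upper hw_upper

theorem mem_openComponent {C : ConvexCone 𝕜 M} {y z : M} :
    z ∈ openComponent C y ↔ ∃ a b : 𝕜, 0 < a ∧ 0 < b ∧ z - a • y ∈ C ∧ b • y - z ∈ C :=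
  Iff.rfl

end

theorem exists_forall_sub_smul_mem_openComponent {𝕜 M : Type*} [Field 𝕜] [LinearOrder 𝕜]
    [IsStrictOrderedRing 𝕜] [AddCommGroup M] [Module 𝕜 M] {C : ConvexCone 𝕜 M} {y z w : M}
    (hz : z ∈ openComponent C y) (hw : w ∈ openComponent C y) :
    ∃ δ : 𝕜, 0 < δ ∧ ∀ s, 0 < s → s < δ → z - s • w ∈ openComponent C y := by
  obtain ⟨a, b, ha, hb, hz_lower, hz_upper⟩ := hz
  obtain ⟨c, d, hc, hd, hw_lower, hw_upper⟩ := hw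
  refine ⟨min (a / d) (b / c), lt_min (div_pos ha hd) (div_pos hb hc), fun s hs hsδ => ?_⟩
  have hsd : s * d < a := (lt_div_iff₀ hd).1 (hsδ.trans_le (min_le_left _ _))
  have hsc : s * c < b := (lt_div_iff₀ hc).1 (hsδ.trans_le (min_le_right _ _))
  refine ⟨a - s * d, b - s * c, sub_pos.2 hsd, sub_pos.2 hsc, ?_, ?_⟩
  · convert C.add_mem hz_lower (C.smul_mem hs hw_upper) using 1
    module
  · convert C.add_mem hz_upper (C.smul_mem hs hw_lower) using 1
    module

theorem componentOf_eq_openComponent {r : Y → Y → Prop} {C : ConvexCone ℝ Y}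
    (hr : ∀ y z, r y z ↔ z - y ∈ C) {y : Y} (hy : y ∈ C) :
    componentOf r y = openComponent C y := by
  ext z
  simp only [componentOf, posCone, majEquiv, maj, hr, sub_zero, Set.mem_ofPred_eq,
    SetLike.mem_coe, mem_openComponent]
  constructor
  · rintro ⟨-, ⟨μ, hμ, hupper⟩, ⟨ν, hν, hlower⟩⟩
    refine ⟨ν, μ⁻¹, hν, inv_pos.2 hμ, hlower, ?_⟩
    simpa only [smul_sub, inv_smul_smul₀ hμ.ne'] using C.smul_mem (inv_pos.2 hμ) hupper
  · rintro ⟨a, b, ha, hb, hlower, hupper⟩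
    have hz : z ∈ C := by
      simpa only [sub_add_cancel] using C.add_mem hlower (C.smul_mem ha hy)
    refine ⟨hz, ⟨b⁻¹, inv_pos.2 hb, ?_⟩, ⟨a, ha, hlower⟩⟩
    simpa only [smul_sub, inv_smul_smul₀ hb.ne'] using C.smul_mem (inv_pos.2 hb) hupper

theorem icr_eq_self_of_forall_sub_smul_mem {K : ConvexCone ℝ Y}
    (hK : ∀ z ∈ K, ∀ w ∈ K, ∃ δ : ℝ, 0 < δ ∧ ∀ s, 0 < s → s < δ → z - s • w ∈ K) :
    icr (K : Set Y) = K := by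
  refine Set.Subset.antisymm (fun z hz => hz.1) fun z hz => ⟨hz, fun w hw => ?_⟩
  obtain ⟨δ, hδ, hsub⟩ := hK z hz w hw
  refine ⟨min 1 δ, lt_min one_pos hδ, fun t ht_lower ht_upper => ?_⟩
  obtain ht | ht := le_or_gt 0 t
  · exact K.convex.add_smul_sub_mem hz hw ⟨ht, (ht_upper.trans_le (min_le_left _ _)).le⟩
  · have hmem : z - (-t) • w ∈ K :=
      hsub (-t) (neg_pos.2 ht) ((neg_lt.1 ht_lower).trans_le (min_le_right _ _))
    have hsplit : z + t • (w - z) = z - (-t) • w + (-t) • z := by module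
    exact hsplit ▸ K.add_mem hmem (K.smul_mem (neg_pos.2 ht) hz)

theorem stmt_1_general (r : Y → Y → Prop)
    (hsmul : ∀ ⦃y₁ y₂ : Y⦄ ⦃l : ℝ⦄, 0 < l → r y₁ y₂ → r (l • y₁) (l • y₂))
    (hadd : ∀ ⦃y₁ y₂ : Y⦄ (y : Y), r y₁ y₂ → r (y₁ + y) (y₂ + y))
    (htrans : ∀ ⦃y₁ y₂ y₃ : Y⦄, r y₁ y₂ → r y₂ y₃ → r y₁ y₃)
    (E : Set Y) (hE : IsOpenComponent r E) :
    IsConeSet E ∧ Convex ℝ E ∧ E = icr E := by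
  obtain ⟨C, hr⟩ := exists_convexCone_rel_iff_sub_mem hsmul hadd htrans
  obtain ⟨y, hy, rfl⟩ := hE
  have hyC : y ∈ C := by simpa only [sub_zero] using (hr 0 y).1 hy
  rw [componentOf_eq_openComponent hr hyC]
  exact ⟨fun z hz l hl => (openComponent C y).smul_mem hl hz, (openComponent C y).convex,
    (icr_eq_self_of_forall_sub_smul_mem fun _ hz _ hw =>
      exists_forall_sub_smul_mem_openComponent hz hw).symm⟩

/-- Every open component of the positive cone is a relatively algebraic open
convex cone. -/
theorem stmt_1 (r : Y → Y → Prop) (h : IsCompatiblePartialPreference r)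
    (E : Set Y) (hE : IsOpenComponent r E) :
    IsConeSet E ∧ Convex ℝ E ∧ E = icr E :=
  stmt_1_general r h.smul_compat h.add_compat h.trans E hE
end

section
/- Let Y be a real vector space and ≺ a compatible partial preference on Y with positive cone P_≺. Then the set O(P_≺) of open components of P_≺, partially ordered by ⊴*, is an upper lattice: every two open components E₁, E₂ have a least upper bound E₁ ∨ E₂ in (O(P_≺), ⊴*), and moreover E_y ∨ E_z = E_{y+z} for all y, z ∈ P_≺, i.e. for all y, z ∈ P_≺ the open component E_{y+z} is the least upper bound of {E_y, E_z} with respect to ⊴*. -/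
open Pointwise

variable {Y : Type*} [AddCommGroup Y] [Module ℝ Y]

/-!
For `y, z` in the positive cone, `y + z ⊴ w` holds if and only if `y ⊴ w` and `z ⊴ w`: adding
`νμy ≺ νw` and `μνz ≺ μw` gives `μν(y + z) ≺ (μ + ν)w`, and conversely `y ≺ y + z` and
`z ≺ y + z`. Since `E_y ⊴* E_z` means `y ⊴ z`, this is the universal property of `E_y ∨ E_z`
for the component of `y + z`.
-/

/-- A transitive relation compatible with the vector space operations. Besides the compatible
partial preferences these include, for instance, the preorders `y ≤ z` given by `z - y ∈ K` for a
convex cone `K` containing `0`. -/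
structure IsCompatibleTransitive (r : Y → Y → Prop) : Prop where
  smul_compat : ∀ ⦃y₁ y₂ : Y⦄ ⦃l : ℝ⦄, 0 < l → r y₁ y₂ → r (l • y₁) (l • y₂)
  add_compat : ∀ ⦃y₁ y₂ : Y⦄ (y : Y), r y₁ y₂ → r (y₁ + y) (y₂ + y)
  trans : ∀ ⦃y₁ y₂ y₃ : Y⦄, r y₁ y₂ → r y₂ y₃ → r y₁ y₃

theorem IsCompatiblePartialPreference.isCompatibleTransitive {r : Y → Y → Prop}
    (h : IsCompatiblePartialPreference r) : IsCompatibleTransitive r :=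
  ⟨h.smul_compat, h.add_compat, h.trans⟩

/-- `E` is the least upper bound of `E₁` and `E₂` among the open components ordered by `⊴*`.
That `E` is itself an open component is not part of the definition. -/
def IsComponentSup (r : Y → Y → Prop) (E₁ E₂ E : Set Y) : Prop :=
  compLE r E₁ E ∧ compLE r E₂ E ∧
    ∀ E' : Set Y, IsOpenComponent r E' → compLE r E₁ E' → compLE r E₂ E' → compLE r E E'

namespace IsCompatibleTransitive

variable {r : Y → Y → Prop} {x y z w : Y}

theorem add_rel_add (h : IsCompatibleTransitive r) (hxy : r x y) (hzw : r z w) :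
    r (x + z) (y + w) := by
  have hyzw : r (y + z) (y + w) := by
    simpa only [add_comm y] using h.add_compat y hzw
  exact h.trans (h.add_compat z hxy) hyzw

theorem rel_self_add (h : IsCompatibleTransitive r) (y : Y) (hz : z ∈ posCone r) :
    r y (y + z) := by
  simpa only [zero_add, add_comm z y] using h.add_compat y hz

theorem add_mem_posCone (h : IsCompatibleTransitive r) (hy : y ∈ posCone r)
    (hz : z ∈ posCone r) : y + z ∈ posCone r :=
  h.trans hy (h.rel_self_add y hz)

theorem smul_mem_posCone (h : IsCompatibleTransitive r) {l : ℝ} (hl : 0 < l)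
    (hy : y ∈ posCone r) : l • y ∈ posCone r := by
  simpa only [posCone, Set.mem_ofPred_eq, smul_zero] using h.smul_compat hl hy

theorem maj_refl (h : IsCompatibleTransitive r) (hy : y ∈ posCone r) : maj r y y := by
  have hhalf : (0 : ℝ) < 1 / 2 := one_half_pos
  have half_rel : r ((1 / 2 : ℝ) • y) ((1 / 2 : ℝ) • y + (1 / 2 : ℝ) • y) :=
    h.rel_self_add _ (h.smul_mem_posCone hhalf hy)
  rw [← add_smul, add_halves, one_smul] at half_rel
  exact ⟨1 / 2, hhalf, half_rel⟩

theorem maj_trans (h : IsCompatibleTransitive r) (hxy : maj r x y) (hyz : maj r y z) :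
    maj r x z := by
  obtain ⟨μ, hμ, hxy⟩ := hxy
  obtain ⟨ν, hν, hyz⟩ := hyz
  refine ⟨ν * μ, mul_pos hν hμ, ?_⟩
  rw [mul_smul]
  exact h.trans (h.smul_compat hν hxy) hyz

theorem add_maj (h : IsCompatibleTransitive r) (hy : maj r y w) (hz : maj r z w) :
    maj r (y + z) w := by
  obtain ⟨μ, hμ, hy⟩ := hy
  obtain ⟨ν, hν, hz⟩ := hz
  have hsum : 0 < μ + ν := add_pos hμ hν
  have rel_sum : r ((μ * ν) • (y + z)) ((μ + ν) • w) := by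
    convert h.add_rel_add (h.smul_compat hν hy) (h.smul_compat hμ hz) using 1 <;> module
  refine ⟨(μ + ν)⁻¹ * (μ * ν), by positivity, ?_⟩
  rw [mul_smul]
  simpa only [inv_smul_smul₀ hsum.ne'] using h.smul_compat (inv_pos.mpr hsum) rel_sum

theorem maj_self_add (h : IsCompatibleTransitive r) (y : Y) (hz : z ∈ posCone r) :
    maj r y (y + z) :=
  ⟨1, one_pos, by simpa only [one_smul] using h.rel_self_add y hz⟩

theorem add_maj_iff (h : IsCompatibleTransitive r) (hy : y ∈ posCone r) (hz : z ∈ posCone r) :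
    maj r (y + z) w ↔ maj r y w ∧ maj r z w where
  mp hw := ⟨h.maj_trans (h.maj_self_add y hz) hw,
    h.maj_trans (add_comm z y ▸ h.maj_self_add z hy) hw⟩
  mpr hw := h.add_maj hw.1 hw.2

theorem mem_componentOf_self (h : IsCompatibleTransitive r) (hy : y ∈ posCone r) :
    y ∈ componentOf r y :=
  ⟨hy, h.maj_refl hy, h.maj_refl hy⟩

theorem compLE_componentOf_iff (h : IsCompatibleTransitive r) (hy : y ∈ posCone r)
    (hz : z ∈ posCone r) : compLE r (componentOf r y) (componentOf r z) ↔ maj r y z where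
  mp hle := hle y (h.mem_componentOf_self hy) z (h.mem_componentOf_self hz)
  mpr hyz := by
    rintro a ⟨-, hay, -⟩ b ⟨-, -, hzb⟩
    exact h.maj_trans hay (h.maj_trans hyz hzb)

theorem isComponentSup_componentOf_add (h : IsCompatibleTransitive r) (hy : y ∈ posCone r)
    (hz : z ∈ posCone r) :
    IsComponentSup r (componentOf r y) (componentOf r z) (componentOf r (y + z)) := by
  have hyz : y + z ∈ posCone r := h.add_mem_posCone hy hz
  obtain ⟨y_maj, z_maj⟩ : maj r y (y + z) ∧ maj r z (y + z) :=
    (h.add_maj_iff hy hz).mp (h.maj_refl hyz)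
  refine ⟨(h.compLE_componentOf_iff hy hyz).mpr y_maj,
    (h.compLE_componentOf_iff hz hyz).mpr z_maj, ?_⟩
  rintro _ ⟨w, hw, rfl⟩ hyw hzw
  rw [h.compLE_componentOf_iff hy hw] at hyw
  rw [h.compLE_componentOf_iff hz hw] at hzw
  exact (h.compLE_componentOf_iff hyz hw).mpr ((h.add_maj_iff hy hz).mpr ⟨hyw, hzw⟩)

end IsCompatibleTransitive

theorem stmt_2_general (r : Y → Y → Prop) (h : IsCompatibleTransitive r) :
    (∀ E₁ E₂ : Set Y, IsOpenComponent r E₁ → IsOpenComponent r E₂ →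
      ∃ E : Set Y, IsOpenComponent r E ∧ IsComponentSup r E₁ E₂ E) ∧
    ∀ y ∈ posCone r, ∀ z ∈ posCone r,
      IsComponentSup r (componentOf r y) (componentOf r z) (componentOf r (y + z)) := by
  refine ⟨?_, fun y hy z hz ↦ h.isComponentSup_componentOf_add hy hz⟩
  rintro _ _ ⟨y, hy, rfl⟩ ⟨z, hz, rfl⟩
  exact ⟨componentOf r (y + z), ⟨y + z, h.add_mem_posCone hy hz, rfl⟩,
    h.isComponentSup_componentOf_add hy hz⟩

/-- `(O(P_≺), ⊴*)` is an upper lattice and `E_y ∨ E_z = E_{y+z}`. -/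
theorem stmt_2 (r : Y → Y → Prop) (h : IsCompatiblePartialPreference r) :
    (∀ E₁ E₂ : Set Y, IsOpenComponent r E₁ → IsOpenComponent r E₂ →
      ∃ E : Set Y, IsOpenComponent r E ∧ compLE r E₁ E ∧ compLE r E₂ E ∧
        ∀ E' : Set Y, IsOpenComponent r E' → compLE r E₁ E' → compLE r E₂ E' →
          compLE r E E') ∧
    ∀ y ∈ posCone r, ∀ z ∈ posCone r,
      compLE r (componentOf r y) (componentOf r (y + z)) ∧
      compLE r (componentOf r z) (componentOf r (y + z)) ∧
      ∀ E' : Set Y, IsOpenComponent r E' → compLE r (componentOf r y) E' →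
        compLE r (componentOf r z) E' → compLE r (componentOf r (y + z)) E' :=
  stmt_2_general r h.isCompatibleTransitive
end

section
/- Let Y be a real vector space and ≺ a compatible partial preference on Y with positive cone P_≺. Let 𝓔 be a subfamily of the family O(P_≺) of open components of P_≺ that is linearly ordered by ⊴*. Then for every E ∈ 𝓔 which is not the least element of 𝓔, the set F̂_𝓔(E) := ⋃{Ẽ ∈ 𝓔 | Ẽ ⊲* E} is a convex cone and Lin(F̂_𝓔(E)) ∩ E = ∅, where Lin(F̂_𝓔(E)) := F̂_𝓔(E) − F̂_𝓔(E). -/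
open Pointwise

variable {Y : Type*} [AddCommGroup Y] [Module ℝ Y]

/-!
Adding an element of an open component to an element of a larger one (for `⊴*`) stays in the larger
one, so the union of a chain of components is closed under addition. If `f` lies in a component
`⊴* E`, `0 ≺ g` and `f - g ∈ E`, then `f - g ≺ f` and `f ⊴ f - g`, hence `f ≖ f - g` and the
component of `f` is `E` itself; so `f` cannot lie in a component strictly below `E`.
-/

/-- A transitive relation compatible with the vector space operations. Besides the compatible
partial preferences, these are the preorders of preordered vector spaces; the theory of open
components applies to both. -/
structure IsCompatibleTransRel (r : Y → Y → Prop) : Prop where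
  smul_compat : ∀ ⦃y₁ y₂ : Y⦄ ⦃l : ℝ⦄, 0 < l → r y₁ y₂ → r (l • y₁) (l • y₂)
  add_compat : ∀ ⦃y₁ y₂ : Y⦄ (y : Y), r y₁ y₂ → r (y₁ + y) (y₂ + y)
  trans : ∀ ⦃y₁ y₂ y₃ : Y⦄, r y₁ y₂ → r y₂ y₃ → r y₁ y₃

section OpenComponents

variable {r : Y → Y → Prop} {E F : Set Y} {𝓒 : Set (Set Y)} {a b c d x y : Y}

theorem IsCompatiblePartialPreference.isCompatibleTransRel
    (h : IsCompatiblePartialPreference r) : IsCompatibleTransRel r :=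
  ⟨h.smul_compat, h.add_compat, h.trans⟩

theorem IsConeSet.convex {K : Set Y} (hK : IsConeSet K)
    (hadd : ∀ x ∈ K, ∀ y ∈ K, x + y ∈ K) : Convex ℝ K :=
  ConvexCone.convex
    { carrier := K
      smul_mem' := fun l hl y hy => hK y hy l hl
      add_mem' := fun x hx y hy => hadd x hx y hy }

theorem maj_of_rel (hab : r a b) : maj r a b :=
  ⟨1, one_pos, by rwa [one_smul]⟩

theorem IsOpenComponent.subset_posCone (hE : IsOpenComponent r E) : E ⊆ posCone r := by
  obtain ⟨y, -, rfl⟩ := hE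
  exact fun _ hx => hx.1

namespace IsCompatibleTransRel

theorem rel_iff_sub_mem_posCone (h : IsCompatibleTransRel r) : r a b ↔ b - a ∈ posCone r := by
  constructor <;> intro hab
  · simpa [posCone, sub_eq_add_neg] using h.add_compat (-a) hab
  · simpa using h.add_compat a hab

theorem rel_add_add (h : IsCompatibleTransRel r) (hab : r a b) (hcd : r c d) :
    r (a + c) (b + d) := by
  refine h.trans (h.add_compat c hab) ?_
  simpa only [add_comm b] using h.add_compat b hcd

theorem isConeSet_posCone (h : IsCompatibleTransRel r) : IsConeSet (posCone r) :=
  fun y hy l hl => by simpa [posCone] using h.smul_compat hl hy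

theorem add_mem_posCone (h : IsCompatibleTransRel r) (ha : a ∈ posCone r) (hb : b ∈ posCone r) :
    a + b ∈ posCone r := by
  simpa [posCone] using h.rel_add_add ha hb

theorem maj_refl (h : IsCompatibleTransRel r) (ha : a ∈ posCone r) : maj r a a := by
  refine ⟨1 / 2, one_half_pos, h.rel_iff_sub_mem_posCone.2 ?_⟩
  have half_sub : a - (1 / 2 : ℝ) • a = (1 / 2 : ℝ) • a := by module
  rw [half_sub]
  exact h.isConeSet_posCone a ha _ one_half_pos

theorem maj_trans (h : IsCompatibleTransRel r) (hab : maj r a b) (hbc : maj r b c) :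
    maj r a c := by
  obtain ⟨μ, hμ, hab⟩ := hab
  obtain ⟨ν, hν, hbc⟩ := hbc
  refine ⟨ν * μ, mul_pos hν hμ, ?_⟩
  rw [mul_smul]
  exact h.trans (h.smul_compat hν hab) hbc

theorem maj_smul_smul (h : IsCompatibleTransRel r) {k l : ℝ} (hk : 0 < k) (hl : 0 < l)
    (hab : maj r a b) : maj r (k • a) (l • b) := by
  obtain ⟨μ, hμ, hab⟩ := hab
  refine ⟨l * μ * k⁻¹, by positivity, ?_⟩
  rw [mul_smul, inv_smul_smul₀ hk.ne', mul_smul]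
  exact h.smul_compat hl hab

theorem maj_add (h : IsCompatibleTransRel r) (hac : maj r a c) (hbc : maj r b c) :
    maj r (a + b) c := by
  obtain ⟨μ, hμ, hac⟩ := hac
  obtain ⟨ν, hν, hbc⟩ := hbc
  have hsum : r ((ν * μ) • (a + b)) ((ν + μ) • c) := by
    convert h.rel_add_add (h.smul_compat hν hac) (h.smul_compat hμ hbc) using 1 <;> module
  have hmaj : maj r (a + b) ((ν + μ) • c) := ⟨ν * μ, mul_pos hν hμ, hsum⟩
  have hpos : 0 < ν + μ := add_pos hν hμ
  simpa only [one_smul, inv_smul_smul₀ hpos.ne'] using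
    h.maj_smul_smul one_pos (inv_pos.2 hpos) hmaj

theorem majEquiv_trans (h : IsCompatibleTransRel r) (hab : majEquiv r a b)
    (hbc : majEquiv r b c) : majEquiv r a c :=
  ⟨h.maj_trans hab.1 hbc.1, h.maj_trans hbc.2 hab.2⟩

theorem majEquiv_smul_self (h : IsCompatibleTransRel r) (ha : a ∈ posCone r) {l : ℝ}
    (hl : 0 < l) : majEquiv r (l • a) a := by
  constructor
  · simpa only [one_smul] using h.maj_smul_smul hl one_pos (h.maj_refl ha)
  · simpa only [one_smul] using h.maj_smul_smul one_pos hl (h.maj_refl ha)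

theorem eq_componentOf (h : IsCompatibleTransRel r) (hE : IsOpenComponent r E) (hx : x ∈ E) :
    E = componentOf r x := by
  obtain ⟨y, -, rfl⟩ := hE
  ext z
  exact ⟨fun hz => ⟨hz.1, h.majEquiv_trans hz.2 hx.2.symm⟩,
    fun hz => ⟨hz.1, h.majEquiv_trans hz.2 hx.2⟩⟩

theorem isConeSet_of_isOpenComponent (h : IsCompatibleTransRel r) (hE : IsOpenComponent r E) :
    IsConeSet E := by
  intro y hy l hl
  have hpos : y ∈ posCone r := hE.subset_posCone hy
  rw [h.eq_componentOf hE hy]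
  exact ⟨h.isConeSet_posCone y hpos l hl, h.majEquiv_smul_self hpos hl⟩

theorem add_mem_of_compLE (h : IsCompatibleTransRel r) (hE : IsOpenComponent r E)
    (hF : IsOpenComponent r F) (hEF : compLE r E F) (hx : x ∈ E) (hy : y ∈ F) : x + y ∈ F := by
  have hxpos : x ∈ posCone r := hE.subset_posCone hx
  have hypos : y ∈ posCone r := hF.subset_posCone hy
  have hrel : r y (x + y) := h.rel_iff_sub_mem_posCone.2 (by rwa [add_sub_cancel_right])
  rw [h.eq_componentOf hF hy]
  exact ⟨h.add_mem_posCone hxpos hypos, h.maj_add (hEF x hx y hy) (h.maj_refl hypos),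
    maj_of_rel hrel⟩

theorem eq_of_compLE_of_sub_mem (h : IsCompatibleTransRel r) (hE : IsOpenComponent r E)
    (hF : IsOpenComponent r F) (hEF : compLE r E F) (hx : x ∈ E) (hy : y ∈ posCone r)
    (hxy : x - y ∈ F) : E = F := by
  have hrel : r (x - y) x := h.rel_iff_sub_mem_posCone.2 (by rwa [sub_sub_cancel])
  have hxF : x ∈ F := by
    rw [h.eq_componentOf hF hxy]
    exact ⟨hE.subset_posCone hx, hEF x hx _ hxy, maj_of_rel hrel⟩
  rw [h.eq_componentOf hE hx, ← h.eq_componentOf hF hxF]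

theorem isConeSet_sUnion (h : IsCompatibleTransRel r) (h𝓒 : ∀ E ∈ 𝓒, IsOpenComponent r E) :
    IsConeSet (⋃₀ 𝓒) := by
  rintro y ⟨E, hE, hy⟩ l hl
  exact ⟨E, hE, h.isConeSet_of_isOpenComponent (h𝓒 E hE) y hy l hl⟩

theorem convex_sUnion (h : IsCompatibleTransRel r) (h𝓒 : ∀ E ∈ 𝓒, IsOpenComponent r E)
    (hlin : ∀ E₁ ∈ 𝓒, ∀ E₂ ∈ 𝓒, compLE r E₁ E₂ ∨ compLE r E₂ E₁) : Convex ℝ (⋃₀ 𝓒) := by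
  refine (h.isConeSet_sUnion h𝓒).convex ?_
  rintro x ⟨E₁, hE₁, hx⟩ y ⟨E₂, hE₂, hy⟩
  rcases hlin E₁ hE₁ E₂ hE₂ with hle | hle
  · exact ⟨E₂, hE₂, h.add_mem_of_compLE (h𝓒 E₁ hE₁) (h𝓒 E₂ hE₂) hle hx hy⟩
  · rw [add_comm]
    exact ⟨E₁, hE₁, h.add_mem_of_compLE (h𝓒 E₂ hE₂) (h𝓒 E₁ hE₁) hle hy hx⟩

theorem disjoint_sUnion_sub_posCone (h : IsCompatibleTransRel r)
    (h𝓒 : ∀ E' ∈ 𝓒, IsOpenComponent r E') (hE : IsOpenComponent r E)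
    (hlt : ∀ E' ∈ 𝓒, compLE r E' E ∧ E' ≠ E) : Disjoint (⋃₀ 𝓒 - posCone r) E := by
  rw [Set.disjoint_left]
  rintro _ ⟨x, ⟨E', hE', hx⟩, y, hy, rfl⟩ hxy
  exact (hlt E' hE').2 (h.eq_of_compLE_of_sub_mem (h𝓒 E' hE') hE (hlt E' hE').1 hx hy hxy)

end IsCompatibleTransRel

theorem stmt_4_general (h : IsCompatibleTransRel r) (h𝓒 : ∀ E' ∈ 𝓒, IsOpenComponent r E')
    (hlin : ∀ E₁ ∈ 𝓒, ∀ E₂ ∈ 𝓒, compLE r E₁ E₂ ∨ compLE r E₂ E₁) (hE : IsOpenComponent r E) :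
    IsConeSet (⋃₀ {E' : Set Y | E' ∈ 𝓒 ∧ compLE r E' E ∧ E' ≠ E}) ∧
    Convex ℝ (⋃₀ {E' : Set Y | E' ∈ 𝓒 ∧ compLE r E' E ∧ E' ≠ E}) ∧
    ((⋃₀ {E' : Set Y | E' ∈ 𝓒 ∧ compLE r E' E ∧ E' ≠ E}) -
      (⋃₀ {E' : Set Y | E' ∈ 𝓒 ∧ compLE r E' E ∧ E' ≠ E})) ∩ E = ∅ := by
  set 𝓛 := {E' : Set Y | E' ∈ 𝓒 ∧ compLE r E' E ∧ E' ≠ E}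
  have h𝓛 : ∀ E' ∈ 𝓛, IsOpenComponent r E' := fun E' hE' => h𝓒 E' hE'.1
  have hpos : ⋃₀ 𝓛 ⊆ posCone r := Set.sUnion_subset fun E' hE' => (h𝓛 E' hE').subset_posCone
  have hdisj : Disjoint (⋃₀ 𝓛 - posCone r) E :=
    h.disjoint_sUnion_sub_posCone h𝓛 hE fun _ hE' => hE'.2
  exact ⟨h.isConeSet_sUnion h𝓛,
    h.convex_sUnion h𝓛 fun E₁ h₁ E₂ h₂ => hlin E₁ h₁.1 E₂ h₂.1,
    (hdisj.mono_left (Set.sub_subset_sub_left hpos)).inter_eq⟩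

end OpenComponents

/-- For a linearly ordered subfamily `𝓔` of open components and `E ∈ 𝓔` not
the least element of `𝓔`, the set `F̂_𝓔(E) = ⋃ {Ẽ ∈ 𝓔 | Ẽ ⊲* E}` is a convex cone and
`Lin(F̂_𝓔(E)) ∩ E = ∅`. -/
theorem stmt_4 (r : Y → Y → Prop) (h : IsCompatiblePartialPreference r)
    (𝓔 : Set (Set Y)) (h𝓔 : ∀ E ∈ 𝓔, IsOpenComponent r E)
    (hlin : ∀ E₁ ∈ 𝓔, ∀ E₂ ∈ 𝓔, compLE r E₁ E₂ ∨ compLE r E₂ E₁)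
    (E : Set Y) (hE : E ∈ 𝓔) (hnl : ¬ ∀ E' ∈ 𝓔, compLE r E E') :
    IsConeSet (⋃₀ {E' : Set Y | E' ∈ 𝓔 ∧ compLE r E' E ∧ E' ≠ E}) ∧
    Convex ℝ (⋃₀ {E' : Set Y | E' ∈ 𝓔 ∧ compLE r E' E ∧ E' ≠ E}) ∧
    ((⋃₀ {E' : Set Y | E' ∈ 𝓔 ∧ compLE r E' E ∧ E' ≠ E}) -
      (⋃₀ {E' : Set Y | E' ∈ 𝓔 ∧ compLE r E' E ∧ E' ≠ E})) ∩ E = ∅ :=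
  stmt_4_general h.isCompatibleTransRel h𝓔 hlin (h𝓔 E hE)
end

section
/- Let Y be a real vector space and ≺ a compatible partial preference on Y with positive cone P_≺. For every open component E ∈ O(P_≺), the set F(E) := ⋃{Ẽ ∈ O(P_≺) | Ẽ ⊴* E} is a face of the convex cone P_≺, its relative algebraic interior icr F(E) is nonempty, and icr F(E) = E. -/
open Pointwise

variable {Y : Type*} [AddCommGroup Y] [Module ℝ Y]

/-!
A transitive compatible relation has the form `y ≺ z ↔ z - y ∈ C` for a convex cone `C`. If `e ∈ E`,
then `F(E)` is the subcone `{y ∈ C | y ⊴ e}`, which is hereditary: it contains every summand in `C`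
of each of its elements, and a hereditary subcone is a face. The intrinsic core of a cone `F`
consists of the `z ∈ F` from which a positive multiple of any `y ∈ F` can be subtracted inside `F`.
For `F(E)` this says `y ⊴ z` for all `y ⊴ e`, that is, `e ⊴ z`.
-/

section ConvexCone

variable {C F : ConvexCone ℝ Y}

theorem isFaceOf_of_add_mem (hne : (F : Set Y).Nonempty) (hFC : F ≤ C)
    (hadd : ∀ u ∈ C, ∀ v ∈ C, u + v ∈ F → u ∈ F) : IsFaceOf (C : Set Y) F := by
  refine ⟨hne, F.convex, hFC, fun u hu v hv α hα hα' huv ↦ ?_⟩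
  have hβ : 0 < 1 - α := sub_pos.2 hα'
  have hαu : α • u ∈ C := C.smul_mem hα hu
  have hβv : (1 - α) • v ∈ C := C.smul_mem hβ hv
  exact ⟨(F.smul_mem_iff hα).1 (hadd _ hαu _ hβv huv),
    (F.smul_mem_iff hβ).1 (hadd _ hβv _ hαu (add_comm (α • u) _ ▸ huv))⟩

theorem exists_sub_smul_mem_of_mem_icr {y z : Y} (hz : z ∈ icr (F : Set Y)) (hy : y ∈ F) :
    ∃ μ : ℝ, 0 < μ ∧ z - μ • y ∈ F := by
  obtain ⟨δ, hδ, hline⟩ := hz.2 y hy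
  have hmem : z + (-(δ / 2)) • (y - z) ∈ F := hline _ (by linarith) (by linarith)
  have hpos : 0 < 1 + δ / 2 := by positivity
  refine ⟨δ / 2 / (1 + δ / 2), by positivity, (F.smul_mem_iff hpos).1 ?_⟩
  convert hmem using 1
  match_scalars <;> field_simp

theorem add_smul_sub_mem_of_sub_smul_mem {y z : Y} (hz : z ∈ F) (hy : y ∈ F) {μ t : ℝ}
    (hμ : 0 < μ) (hzy : z - μ • y ∈ F) (ht : -μ < t) (ht' : t < 1) : z + t • (y - z) ∈ F := by
  rcases le_or_gt 0 t with ht₀ | ht₀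
  · exact F.convex.add_smul_sub_mem hz hy ⟨ht₀, ht'.le⟩
  · have hlt : -t / μ < 1 := (div_lt_one hμ).2 (neg_lt.1 ht)
    have hdecomp : z + t • (y - z) = (1 - t - -t / μ) • z + (-t / μ) • (z - μ • y) := by
      match_scalars
      · field_simp
        ring
      · field_simp
    rw [hdecomp]
    exact F.add_mem (F.smul_mem (by linarith) hz)
      (F.smul_mem (div_pos (neg_pos.2 ht₀) hμ) hzy)

theorem mem_icr_convexCone_iff {z : Y} :
    z ∈ icr (F : Set Y) ↔ z ∈ F ∧ ∀ y ∈ F, ∃ μ : ℝ, 0 < μ ∧ z - μ • y ∈ F := by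
  refine ⟨fun hz ↦ ⟨hz.1, fun y ↦ exists_sub_smul_mem_of_mem_icr hz⟩,
    fun ⟨hz, hsub⟩ ↦ ⟨hz, fun y hy ↦ ?_⟩⟩
  obtain ⟨μ, hμ, hzy⟩ := hsub y hy
  refine ⟨min μ 1, lt_min hμ one_pos, fun t ht ht' ↦ ?_⟩
  exact add_smul_sub_mem_of_sub_smul_mem hz hy hμ hzy
    ((neg_le_neg (min_le_left μ 1)).trans_lt ht) (ht'.trans_le (min_le_right μ 1))

end ConvexCone

/-- The compatible transitive relation `y ≺ z ↔ z - y ∈ C` attached to a convex cone `C`; it is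
asymmetric exactly when `0 ∉ C`. -/
def coneRel (C : ConvexCone ℝ Y) (y z : Y) : Prop := z - y ∈ C

theorem exists_eq_coneRel {r : Y → Y → Prop}
    (hsmul : ∀ ⦃y₁ y₂ : Y⦄ ⦃l : ℝ⦄, 0 < l → r y₁ y₂ → r (l • y₁) (l • y₂))
    (hadd : ∀ ⦃y₁ y₂ : Y⦄ (y : Y), r y₁ y₂ → r (y₁ + y) (y₂ + y))
    (htrans : ∀ ⦃y₁ y₂ y₃ : Y⦄, r y₁ y₂ → r y₂ y₃ → r y₁ y₃) :
    ∃ C : ConvexCone ℝ Y, r = coneRel C := by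
  let C : ConvexCone ℝ Y :=
    { carrier := posCone r
      smul_mem' := fun l hl y hy ↦ by
        have : r (l • 0) (l • y) := hsmul hl hy
        rwa [smul_zero] at this
      add_mem' := fun y hy z hz ↦ by
        have : r (0 + z) (y + z) := hadd z hy
        rw [zero_add] at this
        exact htrans hz this }
  refine ⟨C, funext₂ fun y z ↦ propext ⟨fun hyz ↦ ?_, fun hyz ↦ ?_⟩⟩
  · have : r (y + -y) (z + -y) := hadd (-y) hyz
    rwa [add_neg_cancel, ← sub_eq_add_neg] at this
  · have : r (0 + y) (z - y + y) := hadd y hyz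
    rwa [zero_add, sub_add_cancel] at this

section coneRel

variable {C : ConvexCone ℝ Y} {y z w e : Y}

@[simp]
theorem posCone_coneRel : posCone (coneRel C) = C := by
  ext y
  simp only [posCone, coneRel, sub_zero, Set.mem_ofPred_eq, SetLike.mem_coe]

theorem maj_coneRel_refl (hy : y ∈ C) : maj (coneRel C) y y := by
  have hhalf : y - (1 / 2 : ℝ) • y ∈ C := by
    convert C.smul_mem (one_half_pos (α := ℝ)) hy using 1
    module
  exact ⟨1 / 2, one_half_pos, hhalf⟩

theorem maj_coneRel_trans (hyz : maj (coneRel C) y z) (hzw : maj (coneRel C) z w) :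
    maj (coneRel C) y w := by
  obtain ⟨μ, hμ, hzy⟩ := hyz
  obtain ⟨ν, hν, hwz⟩ := hzw
  have hwy : w - (ν * μ) • y ∈ C := by
    convert C.add_mem hwz (C.smul_mem hν hzy) using 1
    module
  exact ⟨ν * μ, mul_pos hν hμ, hwy⟩

theorem maj_smul_left {r : Y → Y → Prop} {l : ℝ} (hl : 0 < l) (hye : maj r y e) :
    maj r (l • y) e := by
  obtain ⟨μ, hμ, hr⟩ := hye
  exact ⟨μ / l, div_pos hμ hl, by rwa [smul_smul, div_mul_cancel₀ _ hl.ne']⟩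

theorem maj_coneRel_add_left (hye : maj (coneRel C) y e) (hze : maj (coneRel C) z e) :
    maj (coneRel C) (y + z) e := by
  obtain ⟨μ, hμ, hy⟩ := hye
  obtain ⟨ν, hν, hz⟩ := hze
  have hpos : 0 < μ + ν := add_pos hμ hν
  have hcomb : e - (μ * ν / (μ + ν)) • (y + z) ∈ C := by
    convert C.add_mem (C.smul_mem (div_pos hν hpos) hy) (C.smul_mem (div_pos hμ hpos) hz) using 1
    match_scalars <;> field_simp
    ring
  exact ⟨μ * ν / (μ + ν), by positivity, hcomb⟩

theorem maj_coneRel_of_add_left (hz : z ∈ C) (hyz : maj (coneRel C) (y + z) e) :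
    maj (coneRel C) y e := by
  obtain ⟨μ, hμ, hmem⟩ := hyz
  have hey : e - μ • y ∈ C := by
    convert C.add_mem hmem (C.smul_mem hμ hz) using 1
    module
  exact ⟨μ, hμ, hey⟩

variable (C e) in
/-- The subcone `{y ∈ C | y ⊴ e}` of the elements of `C` majorized by `e`. For `e` in an open
component `E`, it is the set `F(E)`. -/
def majorizedCone : ConvexCone ℝ Y where
  carrier := {y | y ∈ C ∧ maj (coneRel C) y e}
  smul_mem' _ hl _ hy := ⟨C.smul_mem hl hy.1, maj_smul_left hl hy.2⟩
  add_mem' _ hy _ hz := ⟨C.add_mem hy.1 hz.1, maj_coneRel_add_left hy.2 hz.2⟩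

theorem self_mem_majorizedCone (he : e ∈ C) : e ∈ majorizedCone C e := ⟨he, maj_coneRel_refl he⟩

theorem mem_majorizedCone_of_add_mem (hy : y ∈ C) (hz : z ∈ C)
    (hyz : y + z ∈ majorizedCone C e) : y ∈ majorizedCone C e :=
  ⟨hy, maj_coneRel_of_add_left hz hyz.2⟩

theorem isFaceOf_majorizedCone (he : e ∈ C) : IsFaceOf (C : Set Y) (majorizedCone C e) :=
  isFaceOf_of_add_mem ⟨e, self_mem_majorizedCone he⟩ (fun _ hy ↦ hy.1)
    fun _ hu _ hv ↦ mem_majorizedCone_of_add_mem hu hv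

theorem mem_componentOf_coneRel :
    z ∈ componentOf (coneRel C) e ↔ z ∈ C ∧ majEquiv (coneRel C) z e := by
  rw [componentOf, posCone_coneRel, Set.mem_ofPred_eq, SetLike.mem_coe]

theorem self_mem_componentOf (he : e ∈ C) : e ∈ componentOf (coneRel C) e :=
  mem_componentOf_coneRel.2 ⟨he, maj_coneRel_refl he, maj_coneRel_refl he⟩

theorem isOpenComponent_componentOf (he : e ∈ C) :
    IsOpenComponent (coneRel C) (componentOf (coneRel C) e) :=
  ⟨e, by rwa [posCone_coneRel], rfl⟩

theorem icr_majorizedCone (he : e ∈ C) :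
    icr (majorizedCone C e : Set Y) = componentOf (coneRel C) e := by
  ext z
  rw [mem_icr_convexCone_iff, mem_componentOf_coneRel]
  constructor
  · rintro ⟨⟨hz, hze⟩, hsub⟩
    obtain ⟨μ, hμ, hez⟩ := hsub e (self_mem_majorizedCone he)
    exact ⟨hz, hze, μ, hμ, hez.1⟩
  · rintro ⟨hz, hze, hez⟩
    refine ⟨⟨hz, hze⟩, fun y hy ↦ ?_⟩
    obtain ⟨μ, hμ, hzy⟩ : maj (coneRel C) y z := maj_coneRel_trans hy.2 hez
    refine ⟨μ, hμ, mem_majorizedCone_of_add_mem hzy (C.smul_mem hμ hy.1) ?_⟩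
    rw [sub_add_cancel]
    exact ⟨hz, hze⟩

theorem compLE_componentOf (hye : maj (coneRel C) y e) :
    compLE (coneRel C) (componentOf (coneRel C) y) (componentOf (coneRel C) e) :=
  fun _ ha _ hb ↦ maj_coneRel_trans ha.2.1 (maj_coneRel_trans hye hb.2.2)

theorem sUnion_compLE_componentOf (he : e ∈ C) :
    ⋃₀ {E' : Set Y | IsOpenComponent (coneRel C) E' ∧
      compLE (coneRel C) E' (componentOf (coneRel C) e)} = majorizedCone C e := by
  ext y
  constructor
  · rintro ⟨_, ⟨⟨x, -, rfl⟩, hle⟩, hy⟩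
    exact ⟨(mem_componentOf_coneRel.1 hy).1, hle y hy e (self_mem_componentOf he)⟩
  · rintro ⟨hy, hye⟩
    exact ⟨componentOf (coneRel C) y,
      ⟨isOpenComponent_componentOf hy, compLE_componentOf hye⟩, self_mem_componentOf hy⟩

end coneRel

theorem stmt_6_general (r : Y → Y → Prop)
    (hsmul : ∀ ⦃y₁ y₂ : Y⦄ ⦃l : ℝ⦄, 0 < l → r y₁ y₂ → r (l • y₁) (l • y₂))
    (hadd : ∀ ⦃y₁ y₂ : Y⦄ (y : Y), r y₁ y₂ → r (y₁ + y) (y₂ + y))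
    (htrans : ∀ ⦃y₁ y₂ y₃ : Y⦄, r y₁ y₂ → r y₂ y₃ → r y₁ y₃)
    (E : Set Y) (hE : IsOpenComponent r E) :
    IsFaceOf (posCone r) (⋃₀ {E' : Set Y | IsOpenComponent r E' ∧ compLE r E' E}) ∧
    (icr (⋃₀ {E' : Set Y | IsOpenComponent r E' ∧ compLE r E' E})).Nonempty ∧
    icr (⋃₀ {E' : Set Y | IsOpenComponent r E' ∧ compLE r E' E}) = E := by
  obtain ⟨C, rfl⟩ := exists_eq_coneRel hsmul hadd htrans
  obtain ⟨e, he, rfl⟩ := hE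
  rw [posCone_coneRel] at he ⊢
  rw [sUnion_compLE_componentOf he, icr_majorizedCone he]
  exact ⟨isFaceOf_majorizedCone he, ⟨e, self_mem_componentOf he⟩, rfl⟩

/-- For every open component `E`, the set `F(E) = ⋃ {Ẽ ∈ O(P_≺) | Ẽ ⊴* E}`
is a face of `P_≺`, its intrinsic core is nonempty, and `icr F(E) = E`. -/
theorem stmt_6 (r : Y → Y → Prop) (h : IsCompatiblePartialPreference r)
    (E : Set Y) (hE : IsOpenComponent r E) :
    IsFaceOf (posCone r) (⋃₀ {E' : Set Y | IsOpenComponent r E' ∧ compLE r E' E}) ∧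
    (icr (⋃₀ {E' : Set Y | IsOpenComponent r E' ∧ compLE r E' E})).Nonempty ∧
    icr (⋃₀ {E' : Set Y | IsOpenComponent r E' ∧ compLE r E' E}) = E :=
  stmt_6_general r h.smul_compat h.add_compat h.trans E hE
end

section
/- Let Y be a real vector space and ≺ a compatible weak preference on Y with positive cone P_≺. Then the majorization relation ⊴ on P_≺ is total: for all y, z ∈ P_≺, either y ⊴ z or z ⊴ y. -/
open Pointwise

variable {Y : Type*} [AddCommGroup Y] [Module ℝ Y]

/-!
If `0 ≺ y` then `y ≺ 2y`, and the relation `≺` of a weak preference is negatively transitive, so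
every `z` satisfies `y ≺ z` or `z ≺ 2y`. These give `y ⊴ z` and, after halving, `z ⊴ y`.
-/

theorem isOrderConnected_of_isStrictWeakOrder {α : Type*} (r : α → α → Prop)
    [IsStrictWeakOrder α r] : IsOrderConnected α r where
  conn a b c hac := by
    by_contra! hconn
    obtain ⟨hab, hbc⟩ := hconn
    have hba : ¬ r b a := fun hba => hbc (_root_.trans hba hac)
    have hcb : ¬ r c b := fun hcb => hab (_root_.trans hac hcb)
    exact (IsStrictWeakOrder.incomp_trans a b c ⟨hab, hba⟩ ⟨hbc, hcb⟩).1 hac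

section Preference

variable {r : Y → Y → Prop} {y z : Y}

theorem IsCompatibleWeakPreference.isStrictWeakOrder (h : IsCompatibleWeakPreference r) :
    IsStrictWeakOrder Y r where
  irrefl _ hyy := h.asymm hyy hyy
  trans _ _ _ hab hbc := h.trans hab hbc
  incomp_trans _ _ _ hab hbc := h.indiff_trans hab.1 hab.2 hbc.1 hbc.2

theorem IsCompatiblePartialPreference.smul_rel_smul_of_lt (h : IsCompatiblePartialPreference r)
    (hy : y ∈ posCone r) {a b : ℝ} (hab : a < b) : r (a • y) (b • y) := by
  have hdiff : r ((b - a) • 0) ((b - a) • y) := h.smul_compat (sub_pos.2 hab) hy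
  simpa only [smul_zero, zero_add, ← add_smul, sub_add_cancel] using h.add_compat (a • y) hdiff

theorem maj_of_rel_s7 (hyz : r y z) : maj r y z :=
  ⟨1, one_pos, by rwa [one_smul]⟩

theorem IsCompatiblePartialPreference.maj_of_rel_smul (h : IsCompatiblePartialPreference r)
    {c : ℝ} (hc : 0 < c) (hyz : r y (c • z)) : maj r y z :=
  ⟨c⁻¹, inv_pos.2 hc, by
    simpa only [inv_smul_smul₀ hc.ne'] using h.smul_compat (inv_pos.2 hc) hyz⟩

end Preference

/-- For a compatible weak preference, the majorization relation `⊴` on the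
positive cone is total. -/
theorem stmt_7 (r : Y → Y → Prop) (h : IsCompatibleWeakPreference r) :
    ∀ y ∈ posCone r, ∀ z ∈ posCone r, maj r y z ∨ maj r z y := by
  intro y hy z _
  have := h.isStrictWeakOrder
  have := isOrderConnected_of_isStrictWeakOrder r
  have hy_two : r y ((2 : ℝ) • y) := by
    simpa only [one_smul] using h.smul_rel_smul_of_lt hy one_lt_two
  rcases IsOrderConnected.conn y z ((2 : ℝ) • y) hy_two with hyz | hzy
  · exact Or.inl (maj_of_rel_s7 hyz)
  · exact Or.inr (h.maj_of_rel_smul two_pos hzy)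
end

section
/- Let Y be a real vector space and ≺ a compatible weak preference on Y with positive cone P_≺. Then for every open component E ∈ O(P_≺) the inclusions L_≺ ⊆ L_E ⊆ Lin(E) hold, where L_E is the vector space associated with the convex cone E, L_≺ := L_{P_≺}, and Lin(E) := E − E. -/
open Pointwise

variable {Y : Type*} [AddCommGroup Y] [Module ℝ Y]

/-! Whether `y ≺ z` depends only on `z - y`, so for `k ∈ L_≺` both arguments of `≺`, hence also
of `⊴` and `≖`, may be shifted independently along `k`; the classes of `≖` are therefore invariant
under such shifts. If `k` leaves a nonempty set `E` invariant, then `k = (y + k) - y` with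
`y, y + k ∈ E`; open components are nonempty because `y / 2 ≺ y` for every positive `y`. -/

/-- A compatible binary relation on a real vector space: one invariant under positive dilations
and under translations; it need not be an order. -/
structure IsCompatibleRel (r : Y → Y → Prop) : Prop where
  smul_compat : ∀ ⦃y₁ y₂ : Y⦄ ⦃l : ℝ⦄, 0 < l → r y₁ y₂ → r (l • y₁) (l • y₂)
  add_compat : ∀ ⦃y₁ y₂ : Y⦄ (y : Y), r y₁ y₂ → r (y₁ + y) (y₂ + y)

theorem IsCompatiblePartialPreference.isCompatibleRel {r : Y → Y → Prop}
    (h : IsCompatiblePartialPreference r) : IsCompatibleRel r :=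
  ⟨h.smul_compat, h.add_compat⟩

theorem assocSubspace_subset_sub {K : Set Y} (hK : K.Nonempty) : assocSubspace K ⊆ K - K := by
  obtain ⟨y, hy⟩ := hK
  intro k hk
  exact ⟨y + (1 : ℝ) • k, hk y hy 1, y, hy, by simp⟩

namespace IsCompatibleRel

variable {r : Y → Y → Prop} {E : Set Y} {k y z : Y}

theorem iff_sub_mem_posCone (h : IsCompatibleRel r) : r y z ↔ z - y ∈ posCone r := by
  constructor
  · intro hyz
    simpa [posCone, sub_eq_add_neg] using h.add_compat (-y) hyz
  · intro hzy
    simpa using h.add_compat y hzy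

theorem isConeSet_posCone (h : IsCompatibleRel r) : IsConeSet (posCone r) := by
  intro y hy l hl
  simpa [posCone] using h.smul_compat hl hy

theorem maj_self (h : IsCompatibleRel r) (hy : y ∈ posCone r) : maj r y y := by
  refine ⟨1 / 2, by norm_num, h.iff_sub_mem_posCone.2 ?_⟩
  have sub_half : y - (1 / 2 : ℝ) • y = (1 / 2 : ℝ) • y := by module
  rw [sub_half]
  exact h.isConeSet_posCone y hy _ (by norm_num)

theorem self_mem_componentOf (h : IsCompatibleRel r) (hy : y ∈ posCone r) :
    y ∈ componentOf r y :=
  ⟨hy, h.maj_self hy, h.maj_self hy⟩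

theorem nonempty_of_isOpenComponent (h : IsCompatibleRel r) (hE : IsOpenComponent r E) :
    E.Nonempty := by
  obtain ⟨y, hy, rfl⟩ := hE
  exact ⟨y, h.self_mem_componentOf hy⟩

theorem rel_add_smul (h : IsCompatibleRel r) (hk : k ∈ assocSubspace (posCone r))
    (hyz : r y z) (s t : ℝ) : r (y + s • k) (z + t • k) := by
  have sub_shift_mem : z - y + (t - s) • k ∈ posCone r :=
    hk _ (h.iff_sub_mem_posCone.1 hyz) _
  rw [h.iff_sub_mem_posCone]
  convert sub_shift_mem using 1
  module

theorem maj_add_smul (h : IsCompatibleRel r) (hk : k ∈ assocSubspace (posCone r))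
    (hyz : maj r y z) (s t : ℝ) : maj r (y + s • k) (z + t • k) := by
  obtain ⟨μ, hμ, hyz⟩ := hyz
  refine ⟨μ, hμ, ?_⟩
  rw [smul_add, smul_smul]
  exact h.rel_add_smul hk hyz (μ * s) t

theorem majEquiv_add_smul (h : IsCompatibleRel r) (hk : k ∈ assocSubspace (posCone r))
    (hyz : majEquiv r y z) (s t : ℝ) : majEquiv r (y + s • k) (z + t • k) :=
  ⟨h.maj_add_smul hk hyz.1 s t, h.maj_add_smul hk hyz.2 t s⟩

theorem assocSubspace_posCone_subset_componentOf (h : IsCompatibleRel r) (z : Y) :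
    assocSubspace (posCone r) ⊆ assocSubspace (componentOf r z) := by
  rintro k hk y ⟨hy, hyz⟩ t
  have shift_majEquiv : majEquiv r (y + t • k) z := by
    simpa using h.majEquiv_add_smul hk hyz t 0
  exact ⟨hk y hy t, shift_majEquiv⟩

end IsCompatibleRel

theorem stmt_9_general (r : Y → Y → Prop) (h : IsCompatibleRel r)
    (E : Set Y) (hE : IsOpenComponent r E) :
    assocSubspace (posCone r) ⊆ assocSubspace E ∧ assocSubspace E ⊆ E - E := by
  refine ⟨?_, assocSubspace_subset_sub (h.nonempty_of_isOpenComponent hE)⟩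
  obtain ⟨z, -, rfl⟩ := hE
  exact h.assocSubspace_posCone_subset_componentOf z

/-- For a compatible weak preference, `L_≺ ⊆ L_E ⊆ Lin(E)` for every open
component `E`. -/
theorem stmt_9 (r : Y → Y → Prop) (h : IsCompatibleWeakPreference r)
    (E : Set Y) (hE : IsOpenComponent r E) :
    assocSubspace (posCone r) ⊆ assocSubspace E ∧ assocSubspace E ⊆ E - E :=
  stmt_9_general r h.isCompatibleRel E hE
end

section
/- Let Y be a real vector space and ≺ a compatible weak preference on Y with positive cone P_≺. Then for each open component E ∈ O(P_≺) there is a nonzero linear function φ_E : Y → ℝ such that E = {y ∈ Lin(E) | φ_E(y) > 0} and L_E = {y ∈ Lin(E) | φ_E(y) = 0}. Furthermore, φ_E(y) = 0 for all y ∈ Lin(Ẽ) whenever Ẽ ∈ O(P_≺) satisfies Ẽ ⊲* E. -/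
open Pointwise

variable {Y : Type*} [AddCommGroup Y] [Module ℝ Y]

/-!
For a weak preference the vectors `y` with `¬ y ≺ 0` form a convex cone `C`. If `e ∈ E`, then `e` is
an order unit of `Lin(E)`, so the M. Riesz extension theorem gives a linear `φ` with `φ e = 1` that
is nonnegative on `C ∩ Lin(E)`. Membership of `y` in `E` amounts to `μ • e ≺ y` for some `μ > 0`
within `Lin(E)`; if it fails for `μ = φ y / 2`, then `μ • e - y ∈ C`, whence `φ y ≤ 0`, so this
condition is equivalent to `φ y > 0`. A positive vector of a smaller component lies in `Lin(E)`
but not in `E`, so `φ` is both nonnegative and not positive there.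
-/

theorem coe_span_convexCone_eq_sub {R M : Type*} [Ring R] [LinearOrder R] [AddLeftStrictMono R]
    [AddCommGroup M] [Module R M] {C : ConvexCone R M} (hC : (C : Set M).Nonempty) :
    (Submodule.span R (C : Set M) : Set M) = C - C := by
  set V := Submodule.span R (C : Set M)
  refine Set.Subset.antisymm (fun x hx => ?_) ?_
  · cases subsingleton_or_nontrivial V
    · obtain ⟨c, hc⟩ := hC
      have hx0 : x = 0 := congrArg Subtype.val (Subsingleton.elim (⟨x, hx⟩ : V) 0)
      exact ⟨c, hc, c, hc, (sub_self c).trans hx0.symm⟩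
    · have hrepr : (C.comap V.subtype).IsReproducing :=
        .of_span_eq_top Submodule.span_span_coe_preimage
      obtain ⟨a, ha, b, hb, hab⟩ := hrepr.ge (Set.mem_univ (⟨x, hx⟩ : V))
      exact ⟨a, ha, b, hb, congrArg Subtype.val hab⟩
  · rintro _ ⟨a, ha, b, hb, rfl⟩
    exact V.sub_mem (Submodule.subset_span ha) (Submodule.subset_span hb)

theorem assocSubspace_openHalfspace (V : Submodule ℝ Y) (φ : Y →ₗ[ℝ] ℝ)
    (hne : {y | y ∈ V ∧ 0 < φ y}.Nonempty) :
    assocSubspace {y | y ∈ V ∧ 0 < φ y} = {y | y ∈ V ∧ φ y = 0} := by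
  obtain ⟨e, heV, he⟩ := hne
  ext y
  constructor
  · intro hy
    have hline : ∀ t : ℝ, e + t • y ∈ V ∧ 0 < φ (e + t • y) := hy e ⟨heV, he⟩
    refine ⟨by simpa using V.sub_mem (hline 1).1 heV, ?_⟩
    by_contra hφy
    have hpos := (hline (-(φ e / φ y))).2
    simp [hφy] at hpos
  · rintro ⟨hyV, hφy⟩ z ⟨hzV, hz⟩ t
    exact ⟨V.add_mem hzV (V.smul_mem t hyV), by simpa [hφy] using hz⟩

theorem exists_linearMap_eq_one_of_orderUnit (C : PointedCone ℝ Y) {u : Y} (hu : -u ∉ C)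
    (hunit : ∀ y, ∃ c : ℝ, c • u + y ∈ C) :
    ∃ φ : Y →ₗ[ℝ] ℝ, φ u = 1 ∧ ∀ y ∈ C, 0 ≤ φ y := by
  have hu0 : u ≠ 0 := by
    rintro rfl
    exact hu (by simp)
  let coord : Y →ₗ.[ℝ] ℝ := ⟨ℝ ∙ u, LinearEquiv.coord ℝ Y u hu0⟩
  have hcoord : ∀ x : coord.domain, coord x • u = x := LinearEquiv.coord_apply_smul ℝ Y u hu0
  obtain ⟨φ, hφ, hφC⟩ := riesz_extension C coord
    (by
      intro x hx
      by_contra! hneg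
      have hmem : (-coord x)⁻¹ • (x : Y) ∈ C := C.smul_mem (by simpa using hneg.le) hx
      rw [← hcoord x, smul_smul, inv_neg, neg_mul, inv_mul_cancel₀ hneg.ne, neg_one_smul] at hmem
      exact hu hmem)
    (fun y => (hunit y).imp' (fun c => ⟨c • u, Submodule.mem_span_singleton.2 ⟨c, rfl⟩⟩)
      fun _ hc => hc)
  exact ⟨φ, (hφ ⟨u, Submodule.mem_span_singleton_self u⟩).trans
    (LinearEquiv.coord_self ℝ Y u hu0), hφC⟩

theorem exists_linearMap_eq_one_of_orderUnit_on (V : Submodule ℝ Y) (C : PointedCone ℝ Y) {u : Y}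
    (huV : u ∈ V) (hu : -u ∉ C) (hunit : ∀ y ∈ V, ∃ c : ℝ, c • u + y ∈ C) :
    ∃ φ : Y →ₗ[ℝ] ℝ, φ u = 1 ∧ ∀ y ∈ V, y ∈ C → 0 ≤ φ y := by
  obtain ⟨g, hgu, hgC⟩ := exists_linearMap_eq_one_of_orderUnit (C.comap V.subtype)
    (u := ⟨u, huV⟩) hu fun y => hunit y y.2
  obtain ⟨φ, hφ⟩ := g.exists_extend
  have hφg : ∀ y : V, φ y = g y := LinearMap.congr_fun hφ
  exact ⟨φ, (hφg ⟨u, huV⟩).trans hgu, fun y hyV hyC => (hgC ⟨y, hyV⟩ hyC).trans_eq (hφg _).symm⟩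

section Preference

variable {r : Y → Y → Prop} {a b c e y : Y}

namespace IsCompatiblePartialPreference

theorem rel_iff_sub_mem_posCone (h : IsCompatiblePartialPreference r) :
    r a b ↔ b - a ∈ posCone r :=
  ⟨fun hab => by simpa [posCone, sub_eq_add_neg] using h.add_compat (-a) hab,
    fun hab => by simpa using h.add_compat a hab⟩

theorem add_mem_posCone (h : IsCompatiblePartialPreference r) (ha : a ∈ posCone r)
    (hb : b ∈ posCone r) : a + b ∈ posCone r :=
  h.trans hb (by simpa using h.add_compat b ha)

theorem smul_mem_posCone (h : IsCompatiblePartialPreference r) {t : ℝ} (ht : 0 < t)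
    (ha : a ∈ posCone r) : t • a ∈ posCone r := by
  simpa [posCone] using h.smul_compat ht ha

theorem neg_notMem_posCone (h : IsCompatiblePartialPreference r) (ha : a ∈ posCone r) :
    -a ∉ posCone r := fun hneg =>
  h.asymm ha (h.rel_iff_sub_mem_posCone.2 (by rwa [zero_sub]))

theorem zero_notMem_posCone (h : IsCompatiblePartialPreference r) : (0 : Y) ∉ posCone r :=
  fun h0 => h.asymm h0 h0

theorem maj_iff_exists_smul_sub_mem (h : IsCompatiblePartialPreference r) :
    maj r a b ↔ ∃ t : ℝ, 0 < t ∧ t • b - a ∈ posCone r := by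
  simp only [maj, ← h.rel_iff_sub_mem_posCone]
  constructor <;> rintro ⟨t, ht, hab⟩ <;> refine ⟨t⁻¹, inv_pos.2 ht, ?_⟩ <;>
    simpa only [inv_smul_smul₀ ht.ne'] using h.smul_compat (inv_pos.2 ht) hab

theorem maj_refl (h : IsCompatiblePartialPreference r) (ha : a ∈ posCone r) : maj r a a :=
  h.maj_iff_exists_smul_sub_mem.2 ⟨2, two_pos, by rwa [two_smul, add_sub_cancel_right]⟩

theorem maj_trans (h : IsCompatiblePartialPreference r) (hab : maj r a b) (hbc : maj r b c) :
    maj r a c := by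
  obtain ⟨s, hs, hab⟩ := hab
  obtain ⟨t, ht, hbc⟩ := hbc
  refine ⟨t * s, mul_pos ht hs, h.trans ?_ hbc⟩
  rw [mul_smul]
  exact h.smul_compat ht hab

theorem add_maj (h : IsCompatiblePartialPreference r) (hac : maj r a c) (hbc : maj r b c) :
    maj r (a + b) c := by
  obtain ⟨s, hs, hac⟩ := h.maj_iff_exists_smul_sub_mem.1 hac
  obtain ⟨t, ht, hbc⟩ := h.maj_iff_exists_smul_sub_mem.1 hbc
  refine h.maj_iff_exists_smul_sub_mem.2 ⟨s + t, add_pos hs ht, ?_⟩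
  rw [add_smul, add_sub_add_comm]
  exact h.add_mem_posCone hac hbc

theorem maj_add_of_mem_posCone (h : IsCompatiblePartialPreference r) (hb : b ∈ posCone r) :
    maj r a (a + b) :=
  ⟨1, one_pos, h.rel_iff_sub_mem_posCone.2 (by rwa [one_smul, add_sub_cancel_left])⟩

theorem smul_maj_self (h : IsCompatiblePartialPreference r) {t : ℝ} (ht : 0 < t)
    (ha : a ∈ posCone r) : maj r (t • a) a :=
  h.maj_iff_exists_smul_sub_mem.2
    ⟨t + 1, add_pos ht one_pos, by rwa [add_smul, one_smul, add_sub_cancel_left]⟩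

theorem maj_smul_self (h : IsCompatiblePartialPreference r) {t : ℝ} (ht : 0 < t)
    (ha : a ∈ posCone r) : maj r a (t • a) := by
  simpa only [inv_smul_smul₀ ht.ne'] using
    h.smul_maj_self (inv_pos.2 ht) (h.smul_mem_posCone ht ha)

theorem self_mem_componentOf (h : IsCompatiblePartialPreference r) (he : e ∈ posCone r) :
    e ∈ componentOf r e :=
  ⟨he, h.maj_refl he, h.maj_refl he⟩

theorem componentOf_eq_of_mem (h : IsCompatiblePartialPreference r) (ha : a ∈ componentOf r e) :
    componentOf r a = componentOf r e := by
  obtain ⟨-, hae, hea⟩ := ha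
  exact Set.ext fun z => and_congr_right fun _ =>
    ⟨fun ⟨hza, haz⟩ => ⟨h.maj_trans hza hae, h.maj_trans hea haz⟩,
      fun ⟨hze, hez⟩ => ⟨h.maj_trans hze hea, h.maj_trans hae hez⟩⟩

/-- The open component of `e` as a bundled convex cone, to which the general facts about convex
cones and their linear spans apply. -/
def componentCone (h : IsCompatiblePartialPreference r) (e : Y) : ConvexCone ℝ Y where
  carrier := componentOf r e
  smul_mem' := fun _ ht _ ⟨ha, hae, hea⟩ =>
    ⟨h.smul_mem_posCone ht ha, h.maj_trans (h.smul_maj_self ht ha) hae,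
      h.maj_trans hea (h.maj_smul_self ht ha)⟩
  add_mem' := fun _ ⟨ha, hae, hea⟩ _ ⟨hb, hbe, _⟩ =>
    ⟨h.add_mem_posCone ha hb, h.add_maj hae hbe,
      h.maj_trans hea (h.maj_add_of_mem_posCone hb)⟩

theorem coe_span_componentOf (h : IsCompatiblePartialPreference r) (he : e ∈ posCone r) :
    (Submodule.span ℝ (componentOf r e) : Set Y) = componentOf r e - componentOf r e :=
  coe_span_convexCone_eq_sub (C := h.componentCone e) ⟨e, h.self_mem_componentOf he⟩

theorem exists_smul_add_mem_posCone (h : IsCompatiblePartialPreference r) (he : e ∈ posCone r)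
    (hy : y ∈ Submodule.span ℝ (componentOf r e)) :
    ∃ t : ℝ, 0 < t ∧ t • e + y ∈ posCone r := by
  rw [← SetLike.mem_coe, h.coe_span_componentOf he] at hy
  obtain ⟨a, ⟨ha, -⟩, b, ⟨-, hbe, -⟩, rfl⟩ := hy
  obtain ⟨t, ht, hbt⟩ := h.maj_iff_exists_smul_sub_mem.1 hbe
  exact ⟨t, ht, by simpa only [add_sub_left_comm, add_comm] using h.add_mem_posCone hbt ha⟩

theorem maj_of_mem_span_componentOf (h : IsCompatiblePartialPreference r) (he : e ∈ posCone r)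
    (hy : y ∈ Submodule.span ℝ (componentOf r e)) : maj r y e := by
  obtain ⟨t, ht, hyt⟩ := h.exists_smul_add_mem_posCone he (Submodule.neg_mem _ hy)
  exact h.maj_iff_exists_smul_sub_mem.2 ⟨t, ht, by rwa [sub_eq_add_neg]⟩

theorem mem_span_componentOf_of_maj (h : IsCompatiblePartialPreference r) (he : e ∈ posCone r)
    (hy : y ∈ posCone r) (hye : maj r y e) : y ∈ Submodule.span ℝ (componentOf r e) := by
  have hadd : e + y ∈ componentOf r e :=
    ⟨h.add_mem_posCone he hy, h.add_maj (h.maj_refl he) hye,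
      h.maj_add_of_mem_posCone hy⟩
  simpa only [add_sub_cancel_left] using Submodule.sub_mem _ (Submodule.subset_span hadd)
    (Submodule.subset_span (h.self_mem_componentOf he))

end IsCompatiblePartialPreference

namespace IsCompatibleWeakPreference

theorem rel_or_rel (h : IsCompatibleWeakPreference r) (hac : r a c) (b : Y) :
    r a b ∨ r b c := by
  by_contra! hb
  have hba : ¬ r b a := fun hba => hb.2 (h.trans hba hac)
  have hcb : ¬ r c b := fun hcb => hb.1 (h.trans hac hcb)
  exact (h.indiff_trans hb.1 hba hb.2 hcb).1 hac

/-- The pointed cone `{y | ¬ y ≺ 0}` of vectors weakly preferred to `0`. -/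
def nonnegCone (h : IsCompatibleWeakPreference r) : PointedCone ℝ Y :=
  ConvexCone.toPointedCone
    { carrier := {y | -y ∉ posCone r}
      smul_mem' := fun t ht y hy hty => hy <| by
        simpa only [smul_neg, inv_smul_smul₀ ht.ne'] using
          h.smul_mem_posCone (inv_pos.2 ht) hty
      add_mem' := fun a ha b hb hab => (h.rel_or_rel hab (-a)).elim ha fun hrel => hb <| by
        simpa only [neg_add_rev, sub_neg_eq_add, neg_add_cancel_right] using
          h.rel_iff_sub_mem_posCone.1 hrel }
    (by simpa [ConvexCone.Pointed] using h.zero_notMem_posCone)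

theorem mem_nonnegCone (h : IsCompatibleWeakPreference r) :
    y ∈ h.nonnegCone ↔ -y ∉ posCone r := Iff.rfl

end IsCompatibleWeakPreference

/-- `φ` is a linear function `φ_E` representing the open component `E` of `e`: it is nonnegative on
the vectors of `Lin(E)` weakly preferred to `0`, and normalized by `φ e = 1`. Here `Lin(E)` is
encoded as the linear span of `E`. -/
structure RepresentsComponent (r : Y → Y → Prop) (e : Y) (φ : Y →ₗ[ℝ] ℝ) : Prop where
  apply_self : φ e = 1
  nonneg : ∀ y ∈ Submodule.span ℝ (componentOf r e), -y ∉ posCone r → 0 ≤ φ y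

theorem IsCompatibleWeakPreference.exists_representsComponent (h : IsCompatibleWeakPreference r)
    (he : e ∈ posCone r) : ∃ φ, RepresentsComponent r e φ := by
  have heV := Submodule.subset_span (R := ℝ) (h.self_mem_componentOf he)
  obtain ⟨φ, hφe, hφ⟩ := exists_linearMap_eq_one_of_orderUnit_on _ h.nonnegCone heV
    (by rwa [h.mem_nonnegCone, neg_neg, not_not])
    (fun y hy => (h.exists_smul_add_mem_posCone he hy).imp fun _ ht => h.neg_notMem_posCone ht.2)
  exact ⟨φ, hφe, hφ⟩

namespace RepresentsComponent

variable {φ : Y →ₗ[ℝ] ℝ}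

theorem ne_zero (hφ : RepresentsComponent r e φ) : φ ≠ 0 := by
  rintro rfl
  exact zero_ne_one hφ.apply_self

theorem mem_componentOf_iff (hφ : RepresentsComponent r e φ)
    (h : IsCompatiblePartialPreference r) (he : e ∈ posCone r) :
    y ∈ componentOf r e ↔ y ∈ Submodule.span ℝ (componentOf r e) ∧ 0 < φ y := by
  set V := Submodule.span ℝ (componentOf r e)
  have heV : e ∈ V := Submodule.subset_span (h.self_mem_componentOf he)
  constructor
  · intro hy
    have hyV : y ∈ V := Submodule.subset_span hy
    obtain ⟨t, ht, hty⟩ := hy.2.2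
    have hle : 0 ≤ φ (y - t • e) := hφ.nonneg _ (V.sub_mem hyV (V.smul_mem t heV))
      (h.neg_notMem_posCone (h.rel_iff_sub_mem_posCone.1 hty))
    simp only [map_sub, map_smul, hφ.apply_self, smul_eq_mul] at hle
    exact ⟨hyV, by linarith⟩
  · rintro ⟨hyV, hpos⟩
    have hrel : r ((φ y / 2) • e) y := by
      rw [h.rel_iff_sub_mem_posCone]
      by_contra hnot
      have hle : 0 ≤ φ ((φ y / 2) • e - y) :=
        hφ.nonneg _ (V.sub_mem (V.smul_mem _ heV) hyV) (by rwa [neg_sub])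
      simp only [map_sub, map_smul, hφ.apply_self, smul_eq_mul] at hle
      linarith
    exact ⟨h.trans (h.smul_mem_posCone (half_pos hpos) he) hrel,
      h.maj_of_mem_span_componentOf he hyV, φ y / 2, half_pos hpos, hrel⟩

theorem apply_eq_zero_of_maj (hφ : RepresentsComponent r e φ)
    (h : IsCompatiblePartialPreference r) (he : e ∈ posCone r) (hy : y ∈ posCone r)
    (hye : maj r y e) (hyE : y ∉ componentOf r e) : φ y = 0 := by
  have hyV := h.mem_span_componentOf_of_maj he hy hye
  refine le_antisymm (not_lt.1 fun hpos => ?_) (hφ.nonneg y hyV (h.neg_notMem_posCone hy))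
  exact hyE ((hφ.mem_componentOf_iff h he).2 ⟨hyV, hpos⟩)

end RepresentsComponent

end Preference

/-- For a compatible weak preference and each open component `E` there is a
nonzero linear function `φ_E` with `E = {y ∈ Lin(E) | φ_E(y) > 0}` and
`L_E = {y ∈ Lin(E) | φ_E(y) = 0}`; moreover `φ_E` vanishes on `Lin(Ẽ)` whenever
`Ẽ ⊲* E`. -/
theorem stmt_12 (r : Y → Y → Prop) (h : IsCompatibleWeakPreference r)
    (E : Set Y) (hE : IsOpenComponent r E) :
    ∃ φ : Y →ₗ[ℝ] ℝ, φ ≠ 0 ∧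
      E = {y ∈ E - E | 0 < φ y} ∧
      assocSubspace E = {y ∈ E - E | φ y = 0} ∧
      ∀ E' : Set Y, IsOpenComponent r E' → compLE r E' E → E' ≠ E →
        ∀ y ∈ E' - E', φ y = 0 := by
  obtain ⟨e, he, rfl⟩ := hE
  have hpref := h.toIsCompatiblePartialPreference
  obtain ⟨φ, hφ⟩ := h.exists_representsComponent he
  have heE := hpref.self_mem_componentOf he
  have hE : componentOf r e = {y | y ∈ Submodule.span ℝ (componentOf r e) ∧ 0 < φ y} :=
    Set.ext fun _ => hφ.mem_componentOf_iff hpref he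
  rw [← hpref.coe_span_componentOf he]
  refine ⟨φ, hφ.ne_zero, hE, ?_, ?_⟩
  · exact (congrArg assocSubspace hE).trans (assocSubspace_openHalfspace _ φ ⟨e, hE.subset heE⟩)
  · rintro _ ⟨a, -, rfl⟩ hle hne
    have hzero : ∀ y ∈ componentOf r a, φ y = 0 := fun y hy =>
      hφ.apply_eq_zero_of_maj hpref he hy.1 (hle y hy e heE) fun hyE =>
        hne ((hpref.componentOf_eq_of_mem hy).symm.trans (hpref.componentOf_eq_of_mem hyE))
    rintro _ ⟨u, hu, v, hv, rfl⟩
    simp only [map_sub, hzero u hu, hzero v hv, sub_zero]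
end

section
/- Let Y be a real vector space, ≺ a compatible weak preference on Y with positive cone P_≺, and let F_≺ = {φ_E | E ∈ O(P_≺)} be a family of nonzero linear functions φ_E : Y → ℝ indexed by the open components such that E = {y ∈ Lin(E) | φ_E(y) > 0} and L_E = {y ∈ Lin(E) | φ_E(y) = 0} for each E; order F_≺ by φ_E ⊴' φ_{Ẽ} ⟺ Ẽ ⊴* E. Then: for each y ∈ Y, the subfamily F_≺(y) := {φ ∈ F_≺ | φ(y) ≠ 0} is either empty or has a least element with respect to ⊴'; conversely, for each φ_E ∈ F_≺ there exists y ∈ Y such that φ_E is the least element of F_≺(y) with respect to ⊴'. -/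
open Pointwise

variable {Y : Type*} [AddCommGroup Y] [Module ℝ Y]

/-!
Compare a positive `y` with an open component `E`: negative transitivity leaves only two
possibilities, namely that `y` majorizes `E`, or that all multiples of `y` lie below all of `E`.
In the second case `y` belongs to `L_E`, so `φ_E y = 0`. Hence every `E` with `φ_E y ≠ 0` satisfies
`E ⊴* [y]`, where `[y]` is the component of `y`, and `φ_[y] y > 0`: the least element of `F_≺(y)` is
`φ_[y]`. A negative `y` reduces to `-y`, since each `φ_E` is linear. If `y` is indifferent to `0`,
only the second case occurs, and every `φ_E` vanishes at `y`.
-/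

/-- `y` is negligible relative to `z` if every real multiple of `y`, of either sign, strictly
precedes `z`. This expresses that `y` is infinitesimal on the scale of `z`. -/
def Negligible (r : Y → Y → Prop) (y z : Y) : Prop := ∀ t : ℝ, r (t • y) z

theorem maj_of_lt {r : Y → Y → Prop} {x y : Y} (hxy : r x y) : maj r x y :=
  ⟨1, one_pos, by rwa [one_smul]⟩

theorem IsOpenComponent.pos {r : Y → Y → Prop} {E : Set Y} (hE : IsOpenComponent r E) {z : Y}
    (hz : z ∈ E) : r 0 z := by
  obtain ⟨w, -, rfl⟩ := hE
  exact hz.1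

namespace IsCompatiblePartialPreference

variable {r : Y → Y → Prop} (h : IsCompatiblePartialPreference r) {E : Set Y} {x y z : Y}
include h

theorem irrefl (y : Y) : ¬ r y y := fun hy => h.asymm hy hy

theorem smul_pos {c : ℝ} (hc : 0 < c) (hy : r 0 y) : r 0 (c • y) := by
  simpa only [smul_zero] using h.smul_compat hc hy

theorem smul_lt_smul_of_lt (hy : r 0 y) {a b : ℝ} (hab : a < b) : r (a • y) (b • y) := by
  have hdiff : r (0 + a • y) ((b - a) • y + a • y) :=
    h.add_compat _ (h.smul_pos (sub_pos.2 hab) hy)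
  rwa [zero_add, ← add_smul, sub_add_cancel] at hdiff

theorem pos_or_neg_pos_of_smul_pos {t : ℝ} (hty : r 0 (t • y)) : r 0 y ∨ r 0 (-y) := by
  rcases lt_trichotomy t 0 with ht | rfl | ht
  · right
    have hscaled := h.smul_pos (inv_pos.2 (neg_pos.2 ht)) hty
    rwa [inv_neg, neg_smul, inv_smul_smul₀ ht.ne] at hscaled
  · rw [zero_smul] at hty
    exact (h.irrefl 0 hty).elim
  · left
    simpa only [inv_smul_smul₀ ht.ne'] using h.smul_pos (inv_pos.2 ht) hty

theorem maj_trans_s13 (hxy : maj r x y) (hyz : maj r y z) : maj r x z := by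
  obtain ⟨a, ha, hxy⟩ := hxy
  obtain ⟨b, hb, hyz⟩ := hyz
  refine ⟨b * a, mul_pos hb ha, h.trans ?_ hyz⟩
  simpa only [mul_smul] using h.smul_compat hb hxy

theorem smul_maj (hy : r 0 y) {c : ℝ} (hc : 0 < c) : maj r (c • y) y := by
  refine ⟨c⁻¹ / 2, by positivity, ?_⟩
  have hlt : c⁻¹ / 2 * c < 1 := by field_simp; norm_num
  simpa only [smul_smul, one_smul] using h.smul_lt_smul_of_lt hy hlt

theorem maj_refl_s13 (hy : r 0 y) : maj r y y := by
  simpa only [one_smul] using h.smul_maj hy one_pos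

theorem mem_componentOf_self (hy : r 0 y) : y ∈ componentOf r y :=
  ⟨hy, h.maj_refl_s13 hy, h.maj_refl_s13 hy⟩

theorem maj_of_mem_of_mem (hE : IsOpenComponent r E) (hx : x ∈ E) (hz : z ∈ E) : maj r x z := by
  obtain ⟨w, -, rfl⟩ := hE
  exact h.maj_trans_s13 hx.2.1 hz.2.2

theorem mem_of_majEquiv (hE : IsOpenComponent r E) (hz : z ∈ E) (hx : r 0 x)
    (hxz : majEquiv r x z) : x ∈ E := by
  obtain ⟨w, -, rfl⟩ := hE
  exact ⟨hx, h.maj_trans_s13 hxz.1 hz.2.1, h.maj_trans_s13 hz.2.2 hxz.2⟩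

theorem mem_of_smul_lt_of_lt_smul (hE : IsOpenComponent r E) (hz : z ∈ E) {a b : ℝ}
    (ha : 0 < a) (hb : 0 < b) (hax : r (a • z) x) (hxb : r x (b • z)) : x ∈ E := by
  have hz0 : r 0 z := hE.pos hz
  have hx0 : r 0 x := h.trans (h.smul_pos ha hz0) hax
  exact h.mem_of_majEquiv hE hz hx0
    ⟨h.maj_trans_s13 (maj_of_lt hxb) (h.smul_maj hz0 hb), a, ha, hax⟩

theorem mem_assocSubspace_of_negligible (hE : IsOpenComponent r E)
    (hy : ∀ z ∈ E, Negligible r y z) : y ∈ assocSubspace E := by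
  intro z hz t
  have hhalf (s : ℝ) : r (s • y) ((1 / 2 : ℝ) • z) := by
    have hscaled := h.smul_compat one_half_pos (hy z hz (2 * s))
    rwa [smul_smul, one_div, inv_mul_cancel_left₀ two_ne_zero, ← one_div] at hscaled
  have hlower : r ((1 / 2 : ℝ) • z) (z + t • y) := by
    convert h.add_compat ((1 / 2 : ℝ) • z + t • y) (hhalf (-t)) using 1 <;> module
  have hupper : r (z + t • y) ((3 / 2 : ℝ) • z) := by
    convert h.add_compat z (hhalf t) using 1 <;> module
  exact h.mem_of_smul_lt_of_lt_smul hE hz one_half_pos (by norm_num) hlower hupper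

theorem negligible_of_forall_pos (hy : r 0 y) (hyz : ∀ s : ℝ, 0 < s → r (s • y) z) :
    Negligible r y z := by
  intro t
  have ht : t < |t| + 1 := (le_abs_self t).trans_lt (lt_add_one _)
  exact h.trans (h.smul_lt_smul_of_lt hy ht) (hyz _ (by positivity))

end IsCompatiblePartialPreference

namespace IsCompatibleWeakPreference

variable {r : Y → Y → Prop} (h : IsCompatibleWeakPreference r) {E : Set Y} {x y z : Y}
include h

theorem lt_or_lt_of_lt (y : Y) (hxz : r x z) : r x y ∨ r y z := by
  by_contra! ⟨hxy, hyz⟩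
  have hyx : ¬ r y x := fun hyx => hyz (h.trans hyx hxz)
  have hzy : ¬ r z y := fun hzy => hxy (h.trans hxz hzy)
  exact (h.indiff_trans hxy hyx hyz hzy).1 hxz

theorem negligible_of_not_pos_of_not_neg_pos (hy : ¬ r 0 y) (hny : ¬ r 0 (-y)) (hz : r 0 z) :
    Negligible r y z := by
  intro t
  have hty : ¬ r 0 (t • y) := fun hty => (h.pos_or_neg_pos_of_smul_pos hty).elim hy hny
  exact (h.lt_or_lt_of_lt (t • y) hz).resolve_left hty

theorem maj_or_negligible (hy : r 0 y) (hz : r 0 z) : maj r z y ∨ Negligible r y z := by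
  refine or_iff_not_imp_left.2 fun hzy => h.negligible_of_forall_pos hy fun s hs => ?_
  have hhalf : r ((1 / 2 : ℝ) • z) z := by
    simpa only [one_smul] using h.smul_lt_smul_of_lt hz one_half_lt_one
  refine (h.lt_or_lt_of_lt (s • y) hhalf).resolve_left fun hlt => hzy ?_
  exact h.maj_trans_s13 ⟨1 / 2, one_half_pos, hlt⟩ (h.smul_maj hy hs)

theorem compLE_componentOf_of_notMem_assocSubspace (hE : IsOpenComponent r E) (hy : r 0 y)
    (hyE : y ∉ assocSubspace E) : compLE r E (componentOf r y) := by
  obtain ⟨z, hz, hyz⟩ : ∃ z ∈ E, ¬ Negligible r y z := by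
    by_contra! hneg
    exact hyE (h.mem_assocSubspace_of_negligible hE hneg)
  have hzy : maj r z y := (h.maj_or_negligible hy (hE.pos hz)).resolve_right hyz
  intro y₁ hy₁ y₂ hy₂
  exact h.maj_trans_s13 (h.maj_of_mem_of_mem hE hy₁ hz) (h.maj_trans_s13 hzy hy₂.2.2)

theorem mem_assocSubspace_of_not_pos_of_not_neg_pos (hE : IsOpenComponent r E) (hy : ¬ r 0 y)
    (hny : ¬ r 0 (-y)) : y ∈ assocSubspace E :=
  h.mem_assocSubspace_of_negligible hE fun _ hz =>
    h.negligible_of_not_pos_of_not_neg_pos hy hny (hE.pos hz)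

end IsCompatibleWeakPreference

/-- For a family `{φ_E}` of nonzero linear functions representing the open
components (ordered by `φ_E ⊴' φ_Ẽ ⟺ Ẽ ⊴* E`): for each `y` the subfamily
`{φ_E | φ_E(y) ≠ 0}` is empty or has a least element w.r.t. `⊴'` (i.e. a greatest index
w.r.t. `⊴*`); conversely every `φ_E` is the least element of such a subfamily. -/
theorem stmt_13 (r : Y → Y → Prop) (h : IsCompatibleWeakPreference r)
    (Φ : Set Y → (Y →ₗ[ℝ] ℝ))
    (hΦ : ∀ E : Set Y, IsOpenComponent r E → Φ E ≠ 0 ∧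
      E = {y ∈ E - E | 0 < Φ E y} ∧ assocSubspace E = {y ∈ E - E | Φ E y = 0}) :
    (∀ y : Y,
      (∀ E : Set Y, IsOpenComponent r E → Φ E y = 0) ∨
      ∃ E : Set Y, IsOpenComponent r E ∧ Φ E y ≠ 0 ∧
        ∀ E' : Set Y, IsOpenComponent r E' → Φ E' y ≠ 0 → compLE r E' E) ∧
    ∀ E : Set Y, IsOpenComponent r E → ∃ y : Y, Φ E y ≠ 0 ∧
      ∀ E' : Set Y, IsOpenComponent r E' → Φ E' y ≠ 0 → compLE r E' E := by
  have pos (y : Y) (hy : r 0 y) : 0 < Φ (componentOf r y) y :=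
    ((hΦ _ ⟨y, hy, rfl⟩).2.1.subset (h.mem_componentOf_self hy)).2
  have vanish (E : Set Y) (hE : IsOpenComponent r E) (y : Y) (hy : y ∈ assocSubspace E) :
      Φ E y = 0 := ((hΦ E hE).2.2.subset hy).2
  have least (y : Y) (hy : r 0 y) (E : Set Y) (hE : IsOpenComponent r E) (hEy : Φ E y ≠ 0) :
      compLE r E (componentOf r y) :=
    h.compLE_componentOf_of_notMem_assocSubspace hE hy fun hmem => hEy (vanish E hE y hmem)
  refine ⟨fun y => ?_, ?_⟩
  · by_cases hy : r 0 y
    · exact .inr ⟨_, ⟨y, hy, rfl⟩, (pos y hy).ne', least y hy⟩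
    by_cases hny : r 0 (-y)
    · have hne (E : Set Y) : Φ E (-y) ≠ 0 ↔ Φ E y ≠ 0 := by rw [map_neg, neg_ne_zero]
      exact .inr ⟨_, ⟨-y, hny, rfl⟩, (hne _).1 (pos _ hny).ne',
        fun E hE hEy => least _ hny E hE ((hne E).2 hEy)⟩
    · exact .inl fun E hE =>
        vanish E hE y (h.mem_assocSubspace_of_not_pos_of_not_neg_pos hE hy hny)
  · rintro _ ⟨y, hy, rfl⟩
    exact ⟨y, (pos y hy).ne', least y hy⟩
end

section
/- Let Y be a real vector space and let (F, ⊴_F) be a cortege of linear functions on Y. Then F is a linearly independent family in the vector space of linear functions from Y to ℝ: for every finite subfamily {φ₁, …, φ_k} of distinct elements of F and reals μ₁, …, μ_k, if μ₁φ₁ + ⋯ + μ_kφ_k = 0 then μ₁ = ⋯ = μ_k = 0. -/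
open Pointwise

variable {Y : Type*} [AddCommGroup Y] [Module ℝ Y]

/-!
Choose for each `φ ∈ F` a point `y_φ` with `φ` least in `F_{y_φ}`. Then `φ y_φ ≠ 0`, while
`ψ y_φ ≠ 0` forces `φ ≤ ψ`, so the evaluations at the points `y_φ` form a triangular array with
nonzero diagonal. Given a linear relation, evaluate it at `y_φ` for a maximal `φ` occurring in it:
only the diagonal term survives.
-/

section Triangular

variable {ι R M N : Type*} [Ring R] [IsDomain R] [AddCommGroup M] [Module R M]
  [AddCommGroup N] [Module R N] [Module.IsTorsionFree R N]

theorem linearIndependent_of_triangular [PartialOrder ι] {v : ι → M} {f : ι → M →ₗ[R] N}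
    (hdiag : ∀ i, f i (v i) ≠ 0) (hle : ∀ i j, f i (v j) ≠ 0 → i ≤ j) :
    LinearIndependent R v := by
  rw [linearIndependent_iff']
  classical
  intro s c hsum
  by_contra! hc
  obtain ⟨i₀, hi₀, hci₀⟩ := hc
  obtain ⟨i, hi⟩ := (s.filter (c · ≠ 0)).exists_maximal
    ⟨i₀, Finset.mem_filter.mpr ⟨hi₀, hci₀⟩⟩
  obtain ⟨his, hci⟩ := Finset.mem_filter.mp hi.prop
  have hoff : ∀ j ∈ s, j ≠ i → c j • f i (v j) = 0 := by
    intro j hjs hji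
    by_contra hne
    have hj : j ∈ s.filter (c · ≠ 0) :=
      Finset.mem_filter.mpr ⟨hjs, left_ne_zero_of_smul hne⟩
    exact hji (hi.eq_of_ge hj (hle i j (right_ne_zero_of_smul hne)))
  have hdiag_zero : c i • f i (v i) = 0 := calc
    c i • f i (v i) = ∑ j ∈ s, c j • f i (v j) :=
      (Finset.sum_eq_single_of_mem i his hoff).symm
    _ = f i (∑ j ∈ s, c j • v j) := by simp only [map_sum, map_smul]
    _ = 0 := by rw [hsum, map_zero]
  exact smul_ne_zero hci (hdiag i) hdiag_zero

end Triangular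

theorem stmt_14_general {R M N : Type*} [CommRing R] [IsDomain R] [AddCommGroup M] [Module R M]
    [AddCommGroup N] [Module R N] [Module.IsTorsionFree R N] (F : Set (M →ₗ[R] N))
    (le : (M →ₗ[R] N) → (M →ₗ[R] N) → Prop)
    (antisymm : ∀ φ ∈ F, ∀ ψ ∈ F, le φ ψ → le ψ φ → φ = ψ)
    (trans : ∀ φ ∈ F, ∀ ψ ∈ F, ∀ χ ∈ F, le φ ψ → le ψ χ → le φ χ)
    (exists_least : ∀ φ ∈ F, ∃ y, φ y ≠ 0 ∧ ∀ ψ ∈ F, ψ y ≠ 0 → le φ ψ) :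
    LinearIndependent R ((↑) : F → M →ₗ[R] N) := by
  choose y hy hle using fun φ : F ↦ exists_least φ φ.2
  let : PartialOrder F :=
    { le φ ψ := le φ ψ
      le_refl φ := hle φ φ φ.2 (hy φ)
      le_trans φ ψ χ := trans φ φ.2 ψ ψ.2 χ χ.2
      le_antisymm φ ψ h h' := Subtype.ext (antisymm φ φ.2 ψ ψ.2 h h') }
  exact linearIndependent_of_triangular (f := fun φ ↦ LinearMap.applyₗ (y φ)) hy
    fun φ ψ ↦ hle φ ψ ψ.2

theorem IsCortege.linearIndependent {F : Set (Y →ₗ[ℝ] ℝ)}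
    {le : (Y →ₗ[ℝ] ℝ) → (Y →ₗ[ℝ] ℝ) → Prop} (hF : IsCortege F le) :
    LinearIndependent ℝ ((↑) : F → Y →ₗ[ℝ] ℝ) :=
  stmt_14_general F le hF.antisymm hF.trans fun φ hφ ↦
    let ⟨y, hy, hle⟩ := hF.surj φ hφ
    ⟨y, hy.2, fun ψ hψ hψy ↦ hle ψ ⟨hψ, hψy⟩⟩

/-- A cortege of linear functions is a linearly independent family. -/
theorem stmt_14 (F : Set (Y →ₗ[ℝ] ℝ)) (le : (Y →ₗ[ℝ] ℝ) → (Y →ₗ[ℝ] ℝ) → Prop)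
    (hF : IsCortege F le) (k : ℕ) (φ : Fin k → (Y →ₗ[ℝ] ℝ))
    (hinj : Function.Injective φ) (hmem : ∀ i, φ i ∈ F) (μ : Fin k → ℝ)
    (hsum : ∑ i, μ i • φ i = (0 : Y →ₗ[ℝ] ℝ)) :
    ∀ i, μ i = 0 :=
  Fintype.linearIndependent_iff.mp
    (hF.linearIndependent.comp (fun i ↦ ⟨φ i, hmem i⟩) fun _ _ h ↦ hinj (congrArg Subtype.val h))
    μ hsum
end

section
/- Let Y be a real vector space. Every step-linear function u : Y → ℝ is homogeneous, i.e. u(ty) = t·u(y) for all y ∈ Y and all t ∈ ℝ, and for any y, z ∈ Y the following implications hold: if u(z) = 0 then u(y + z) = u(y); and if u(y) > 0 and u(z) > 0 then u(y + z) > 0. -/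
open Pointwise

variable {Y : Type*} [AddCommGroup Y] [Module ℝ Y]

/-! The members of a cortege `F` together form a linear map `y ↦ (φ y)_{φ ∈ F}` into `F → ℝ`, and
`u_F y` is the leading coefficient of the image of `y`. Leading coefficients scale with the
function, vanish only for the zero function, and cannot cancel in a sum when both are positive. -/

open Function

section LeadingCoeff

variable {ι R N : Type*}

/-- `c` is the leading coefficient of `f : ι → N`: the value of `f` at the least point of its
support, or `0` if `f = 0`. This is a relation because the support of a nonzero `f` may have no
least point, in which case `f` has no leading coefficient. -/
def IsLeadingCoeff [LE ι] [Zero N] (f : ι → N) (c : N) : Prop :=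
  (f = 0 ∧ c = 0) ∨ ∃ i, IsLeast (support f) i ∧ f i = c

theorem IsLeadingCoeff.eq_zero [LE ι] [Zero N] {f : ι → N} (hf : IsLeadingCoeff f 0) : f = 0 := by
  rcases hf with ⟨hf, -⟩ | ⟨i, hi, hfi⟩
  · exact hf
  · exact absurd hfi hi.1

theorem IsLeadingCoeff.exists_isLeast [LE ι] [Zero N] {f : ι → N} {c : N}
    (hf : IsLeadingCoeff f c) (hc : c ≠ 0) : ∃ i, IsLeast (support f) i ∧ f i = c :=
  hf.resolve_left fun h => hc h.2

theorem IsLeadingCoeff.unique [PartialOrder ι] [Zero N] {f : ι → N} {c d : N}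
    (hc : IsLeadingCoeff f c) (hd : IsLeadingCoeff f d) : c = d := by
  rcases hc with ⟨rfl, rfl⟩ | ⟨i, hi, rfl⟩ <;> rcases hd with ⟨hf, rfl⟩ | ⟨j, hj, rfl⟩
  · rfl
  · exact absurd rfl hj.1
  · exact congrFun hf i
  · rw [hi.unique hj]

theorem IsLeadingCoeff.const_smul [LE ι] [Semiring R] [IsDomain R] [AddCommMonoid N] [Module R N]
    [Module.IsTorsionFree R N] {f : ι → N} {c : N} (hf : IsLeadingCoeff f c) (t : R) :
    IsLeadingCoeff (t • f) (t • c) := by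
  obtain rfl | ht := eq_or_ne t 0
  · exact .inl ⟨zero_smul R f, zero_smul R c⟩
  rcases hf with ⟨rfl, rfl⟩ | ⟨i, hi, rfl⟩
  · exact .inl ⟨smul_zero t, smul_zero t⟩
  · exact .inr ⟨i, by rwa [support_const_smul_of_ne_zero t f ht], rfl⟩

theorem isLeast_support_add [Preorder ι] [AddZeroClass N] {f g : ι → N} {i : ι}
    (hf : i ∈ lowerBounds (support f)) (hg : i ∈ lowerBounds (support g)) (hi : f i + g i ≠ 0) :
    IsLeast (support (f + g)) i :=
  ⟨hi, fun _ hj => (support_add f g hj).elim (@hf _) (@hg _)⟩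

theorem nonneg_of_le_of_isLeast_support [PartialOrder ι] [Zero N] [Preorder N] {f : ι → N} {i j : ι}
    (hij : i ≤ j) (hj : IsLeast (support f) j) (hfj : 0 ≤ f j) : 0 ≤ f i := by
  obtain rfl | hij := hij.eq_or_lt
  · exact hfj
  · exact (notMem_support.1 fun hi => hij.not_ge (hj.2 hi)).ge

theorem IsLeadingCoeff.pos_of_add [LinearOrder ι] [AddCommMonoid N] [Preorder N]
    [IsOrderedAddMonoid N] {f g : ι → N} {a b c : N} (hf : IsLeadingCoeff f a)
    (hg : IsLeadingCoeff g b) (hfg : IsLeadingCoeff (f + g) c) (ha : 0 < a) (hb : 0 < b) :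
    0 < c := by
  obtain ⟨i, hi, hfi⟩ := hf.exists_isLeast ha.ne'
  obtain ⟨j, hj, hgj⟩ := hg.exists_isLeast hb.ne'
  wlog hij : i ≤ j generalizing f g a b i j
  · exact this hg hf (add_comm f g ▸ hfg) hb ha j hj hgj i hi hfi (le_of_not_ge hij)
  have hgi : 0 ≤ g i := nonneg_of_le_of_isLeast_support hij hj (hgj ▸ hb.le)
  have hpos : 0 < f i + g i := add_pos_of_pos_of_nonneg (hfi ▸ ha) hgi
  have hleast : IsLeast (support (f + g)) i :=
    isLeast_support_add hi.2 (fun _ hk => hij.trans (hj.2 hk)) hpos.ne'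
  rwa [hfg.unique (.inr ⟨i, hleast, rfl⟩)]

end LeadingCoeff

/-- The order of a cortege as a linear order on the subtype of its members, which makes Mathlib's
order theory available; the relation `le` is unconstrained outside `F`. -/
noncomputable abbrev IsCortege.linearOrder {F : Set (Y →ₗ[ℝ] ℝ)}
    {le : (Y →ₗ[ℝ] ℝ) → (Y →ₗ[ℝ] ℝ) → Prop} (hF : IsCortege F le) : LinearOrder F where
  le φ ψ := le φ ψ
  le_refl φ := hF.refl φ φ.2
  le_trans φ ψ χ := hF.trans φ φ.2 ψ ψ.2 χ χ.2
  le_antisymm φ ψ h h' := Subtype.ext (hF.antisymm φ φ.2 ψ ψ.2 h h')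
  le_total φ ψ := hF.total φ φ.2 ψ ψ.2
  toDecidableLE := Classical.decRel _

theorem IsStepLinear.exists_isLeadingCoeff {u : Y → ℝ} (hu : IsStepLinear u) :
    ∃ (F : Set (Y →ₗ[ℝ] ℝ)) (_ : LinearOrder F) (L : Y →ₗ[ℝ] F → ℝ),
      ∀ y, IsLeadingCoeff (L y) (u y) := by
  obtain ⟨F, le, hF, hu⟩ := hu
  refine ⟨F, hF.linearOrder, LinearMap.pi Subtype.val, fun y => ?_⟩
  rcases hu y with ⟨hempty, hy⟩ | ⟨φ, ⟨⟨hφF, hφy⟩, hle⟩, hy⟩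
  · have hvanish (φ : F) : φ.1 y = 0 :=
      by_contra fun hne => Set.eq_empty_iff_forall_notMem.1 hempty φ ⟨φ.2, hne⟩
    exact .inl ⟨funext hvanish, hy⟩
  · exact .inr ⟨⟨φ, hφF⟩, ⟨hφy, fun ψ hψ => hle ψ ⟨ψ.2, hψ⟩⟩, hy.symm⟩

theorem stmt_15_general {ι R M N : Type*} [LinearOrder ι] [Semiring R] [IsDomain R]
    [AddCommMonoid M] [Module R M] [AddCommMonoid N] [Preorder N] [IsOrderedAddMonoid N]
    [Module R N] [Module.IsTorsionFree R N] (L : M →ₗ[R] ι → N) (u : M → N)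
    (hu : ∀ y, IsLeadingCoeff (L y) (u y)) :
    (∀ (y : M) (t : R), u (t • y) = t • u y) ∧
    (∀ y z : M, u z = 0 → u (y + z) = u y) ∧
    (∀ y z : M, 0 < u y → 0 < u z → 0 < u (y + z)) := by
  refine ⟨fun y t => ?_, fun y z hz => ?_, fun y z hy hz => ?_⟩
  · have hty := hu (t • y)
    rw [map_smul] at hty
    exact hty.unique ((hu y).const_smul t)
  · have hLz : L z = 0 := (hz ▸ hu z).eq_zero
    have hyz := hu (y + z)
    rw [map_add, hLz, add_zero] at hyz
    exact hyz.unique (hu y)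
  · exact (hu y).pos_of_add (hu z) (map_add L y z ▸ hu (y + z)) hy hz

/-- Every step-linear function is homogeneous and satisfies:
`u(z) = 0 → u(y+z) = u(y)` and `u(y) > 0, u(z) > 0 → u(y+z) > 0`. -/
theorem stmt_15 (u : Y → ℝ) (hu : IsStepLinear u) :
    (∀ (y : Y) (t : ℝ), u (t • y) = t * u y) ∧
    (∀ y z : Y, u z = 0 → u (y + z) = u y) ∧
    (∀ y z : Y, 0 < u y → 0 < u z → 0 < u (y + z)) := by
  obtain ⟨F, _, L, hL⟩ := hu.exists_isLeadingCoeff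
  exact stmt_15_general L u hL
end
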